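/- arXiv:1311.1405 — 3 statements merged into one kernel-verified Lean document; each statement's English description precedes it below -/
import Mathlib

section
/- Let d ≥ 1 and p_j, q_j ∈ [1,∞] for j = 0,1,2. Suppose there is a constant C > 0 such that ‖a#b‖_{ℳ^{p₀′,q₀′}} ≤ C ‖a‖_{ℳ^{p₁,q₁}} ‖b‖_{ℳ^{p₂,q₂}} for all Schwartz functions a, b on ℝ^{2d} (norms taking values in [0,∞]). Then 3 ≤ 1/q₀ + 1/q₁ + 1/q₂ + 1/p₀ + 1/p₁ + 1/p₂. -/
open MeasureTheory Filter
open scoped ENNReal RealInnerProductSpace BigOperators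

noncomputable section

/-- The phase space `ℝ^d × ℝ^d ≃ ℝ^{2d}`. -/
abbrev PhS (d : ℕ) : Type := EuclideanSpace ℝ (Fin d) × EuclideanSpace ℝ (Fin d)

/-- The symplectic form `σ((x,ξ),(y,η)) = ⟨y,ξ⟩ - ⟨x,η⟩`. -/
def symplForm {d : ℕ} (X Y : PhS d) : ℝ := ⟪Y.1, X.2⟫ - ⟪X.1, Y.2⟫

/-- The symplectic Fourier transform `(F_σ a)(X) = π^{-d} ∫ a(Y) e^{2iσ(X,Y)} dY`. -/
def symplFT (d : ℕ) (a : PhS d → ℂ) (X : PhS d) : ℂ :=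
  ((Real.pi : ℂ) ^ d)⁻¹ * ∫ Y : PhS d, a Y * Complex.exp (2 * Complex.I * (symplForm X Y : ℂ))

/-- The twisted convolution
`(a ∗_σ b)(X) = (2/π)^{d/2} ∫ a(X-Y) b(Y) e^{2iσ(X,Y)} dY`. -/
def twistConv (d : ℕ) (a b : PhS d → ℂ) (X : PhS d) : ℂ :=
  (((2 / Real.pi) ^ ((d : ℝ) / 2) : ℝ) : ℂ) *
    ∫ Y : PhS d, a (X - Y) * b Y * Complex.exp (2 * Complex.I * (symplForm X Y : ℂ))

/-- The Weyl product `a # b = (2π)^{-d/2} a ∗_σ (F_σ b)`. -/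
def weylProd (d : ℕ) (a b : PhS d → ℂ) : PhS d → ℂ := fun X =>
  (((2 * Real.pi) ^ (-(d : ℝ) / 2) : ℝ) : ℂ) * twistConv d a (symplFT d b) X

/-- The `N`-fold Weyl product `a₁ # ⋯ # a_N` of a list of symbols. -/
def weylProdList (d : ℕ) : List (PhS d → ℂ) → (PhS d → ℂ)
  | [] => fun _ => 0
  | [a] => a
  | a :: b :: l => weylProd d a (weylProdList d (b :: l))

/-- The symplectic short-time Fourier transform
`𝒱_Φ a (X,Y) = π^{-d} ∫ a(Z) conj(Φ(Z-X)) e^{2iσ(Y,Z)} dZ`. -/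
def symplSTFT (d : ℕ) (Φ a : PhS d → ℂ) (X Y : PhS d) : ℂ :=
  ((Real.pi : ℂ) ^ d)⁻¹ *
    ∫ Z : PhS d, a Z * (starRingEnd ℂ) (Φ (Z - X)) *
      Complex.exp (2 * Complex.I * (symplForm Y Z : ℂ))

/-- The `L^p` norm (with values in `[0,∞]`) of an `ℝ≥0∞`-valued function,
with the convention of an essential supremum when `p = ∞`. -/
def lpNormENN {α : Type*} [MeasurableSpace α] (μ : Measure α) (p : ℝ≥0∞)
    (f : α → ℝ≥0∞) : ℝ≥0∞ :=
  if p = ∞ then essSup f μ else (∫⁻ x, f x ^ p.toReal ∂μ) ^ (1 / p.toReal)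

/-- The modulation space norm `‖a‖_{ℳ^{p,q}_{(ω)}}` with respect to the window `Φ`. -/
def modNorm (d : ℕ) (p q : ℝ≥0∞) (ω : PhS d × PhS d → ℝ) (Φ a : PhS d → ℂ) : ℝ≥0∞ :=
  lpNormENN volume q fun Y =>
    lpNormENN volume p fun X => ENNReal.ofReal (‖symplSTFT d Φ a X Y‖ * ω (X, Y))

/-- The Wiener amalgam space norm `‖a‖_{𝒲^{p,q}_{(ω)}}` with respect to the window `Φ`. -/
def wienerNorm (d : ℕ) (p q : ℝ≥0∞) (ω : PhS d × PhS d → ℝ) (Φ a : PhS d → ℂ) : ℝ≥0∞ :=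
  lpNormENN volume p fun X =>
    lpNormENN volume q fun Y => ENNReal.ofReal (‖symplSTFT d Φ a X Y‖ * ω (X, Y))

/-- Membership in the class `𝒫_E` of positive, locally bounded, moderate weights. -/
def IsModerateWeight {E : Type*} [NormedAddCommGroup E] (ω : E → ℝ) : Prop :=
  (∀ x, 0 < ω x) ∧ (∀ r : ℝ, ∃ M : ℝ, ∀ x, ‖x‖ ≤ r → ω x ≤ M) ∧
    ∃ C c : ℝ, 0 < C ∧ 0 < c ∧ ∀ x y, ω (x + y) ≤ C * ω x * Real.exp (c * ‖y‖)

/-- The real number `1/p ∈ [0,1]` associated to `p ∈ [1,∞]`. -/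
def rcp (p : ℝ≥0∞) : ℝ := (p⁻¹).toReal

/-- The Hölder–Young exponent function `R_N(p) = (N-1)⁻¹ (Σ_{j=0}^N 1/p_j - 1)`. -/
def RN (N : ℕ) (p : Fin (N + 1) → ℝ≥0∞) : ℝ :=
  ((∑ j, rcp (p j)) - 1) / ((N : ℝ) - 1)

/-- The Weyl weight condition:
`1 ≲ ω₀(X_N+X₀, X_N-X₀) ∏_{j=1}^N ω_j(X_j+X_{j-1}, X_j-X_{j-1})`. -/
def WeylWeightCond (d N : ℕ) (ω : Fin (N + 1) → (PhS d × PhS d → ℝ)) : Prop :=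
  ∃ C : ℝ, 0 < C ∧ ∀ X : Fin (N + 1) → PhS d,
    1 ≤ C * ω 0 (X (Fin.last N) + X 0, X (Fin.last N) - X 0) *
      ∏ j : Fin N, ω j.succ (X j.succ + X j.castSucc, X j.succ - X j.castSucc)

end

/-!
Test the bound on the Gaussians `g_s(x, ξ) = exp (-(s²|x|² + s⁻²|ξ|²))`, `s ≥ 1`. Each `g_s` is
fixed by the symplectic Fourier transform, `g_s # g_s = 2⁻ᵈ g_s`, and `‖g_s‖₂` does not depend on
`s`. Against a fixed window, `g_s` is essentially constant in `ξ` up to scale `s` and has mass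
`s⁻ᵈ` in `x`, so `|𝒱_Φ g_s(X, Y)|` is at most `s⁻ᵈ` times a rapidly decaying function of `X` on the
box `1 × s`; Fourier invariance gives the same decay in `Y`, and a geometric mean combines the two.
Hence `‖g_s‖_{ℳ^{p,q}} ≲ s^{d(1/p + 1/q - 1)}`. Conversely, Moyal's identity and Hölder's inequality
give `‖g_s‖₂² ‖Φ‖₂² ≤ ‖g_s‖_{ℳ^{p₀,q₀}} ‖g_s‖_{ℳ^{p₀',q₀'}}`, and the last factor equals
`2ᵈ ‖g_s # g_s‖_{ℳ^{p₀',q₀'}}`. The assumed bound therefore makes a positive constant `≲` a power of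
`s` with exponent `d (∑ (1/p_j + 1/q_j) - 3)`, and letting `s → ∞` forces the exponent to be
nonnegative.
-/

section LpNorm

variable {α : Type*} [MeasurableSpace α] {μ : Measure α} {p q : ℝ≥0∞} {f g : α → ℝ≥0∞}

lemma lpNormENN_mono (p : ℝ≥0∞) (h : ∀ x, f x ≤ g x) : lpNormENN μ p f ≤ lpNormENN μ p g := by
  unfold lpNormENN
  split_ifs
  · exact essSup_mono_ae (Eventually.of_forall h)
  · gcongr with x
    exact h x

lemma lpNormENN_const_mul (hp : p ≠ 0) {c : ℝ≥0∞} (hc : c ≠ ∞) (f : α → ℝ≥0∞) :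
    lpNormENN μ p (fun x => c * f x) = c * lpNormENN μ p f := by
  unfold lpNormENN
  split_ifs with hp_top
  · exact ENNReal.essSup_const_mul
  · have hp_pos : 0 < p.toReal := ENNReal.toReal_pos hp hp_top
    simp_rw [ENNReal.mul_rpow_of_nonneg _ _ hp_pos.le]
    rw [lintegral_const_mul' _ _ (ENNReal.rpow_ne_top_of_nonneg hp_pos.le hc),
      ENNReal.mul_rpow_of_nonneg _ _ (by positivity), ← ENNReal.rpow_mul,
      mul_one_div_cancel hp_pos.ne', ENNReal.rpow_one]

lemma lpNormENN_le_lintegral_rpow_rcp (hp : 1 ≤ p) (hf : ∀ x, f x ≤ 1) :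
    lpNormENN μ p f ≤ (∫⁻ x, f x ∂μ) ^ rcp p := by
  unfold lpNormENN rcp
  split_ifs with hp_top
  · simpa [hp_top] using essSup_le_of_ae_le 1 (Eventually.of_forall hf)
  · have hp_real : 1 ≤ p.toReal := by
      simpa using ENNReal.toReal_mono hp_top hp
    rw [ENNReal.toReal_inv, one_div]
    gcongr with x
    exact ENNReal.rpow_le_self_of_le_one (hf x) hp_real

lemma lintegral_mul_le_essSup_mul_lintegral (f : α → ℝ≥0∞) (hg : Measurable g) :
    ∫⁻ x, f x * g x ∂μ ≤ essSup f μ * ∫⁻ x, g x ∂μ := by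
  rw [← lintegral_const_mul _ hg]
  refine lintegral_mono_ae ?_
  filter_upwards [ENNReal.ae_le_essSup (μ := μ) f] with x hx
  gcongr

lemma lintegral_mul_le_lpNormENN_mul_lpNormENN (hpq : p⁻¹ + q⁻¹ = 1)
    (hf : Measurable f) (hg : Measurable g) :
    ∫⁻ x, f x * g x ∂μ ≤ lpNormENN μ p f * lpNormENN μ q g := by
  rcases eq_or_ne p ∞ with rfl | hp
  · obtain rfl : q = 1 := by simpa using hpq
    simpa [lpNormENN] using lintegral_mul_le_essSup_mul_lintegral f hg
  rcases eq_or_ne q ∞ with rfl | hq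
  · obtain rfl : p = 1 := by simpa using hpq
    simpa [lpNormENN, mul_comm] using lintegral_mul_le_essSup_mul_lintegral (μ := μ) g hf
  have : ENNReal.HolderConjugate p q := ⟨by simpa using hpq⟩
  rw [lpNormENN, lpNormENN, if_neg hp, if_neg hq]
  exact ENNReal.lintegral_mul_le_Lp_mul_Lq μ (ENNReal.HolderConjugate.toReal_of_ne_top hp hq)
    hf.aemeasurable hg.aemeasurable

lemma one_le_of_inv_add_inv_eq_one (hpq : p⁻¹ + q⁻¹ = 1) : 1 ≤ q := by
  rw [← ENNReal.inv_le_one, ← hpq]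
  exact le_add_self

end LpNorm

section MixedNorm

variable {α β : Type*} [MeasurableSpace α] [MeasurableSpace β] {μ : Measure α} {ν : Measure β}

lemma lintegral_lintegral_mul_le_mixed_lpNormENN {p q p' q' : ℝ≥0∞}
    (hp : p⁻¹ + p'⁻¹ = 1) (hq : q⁻¹ + q'⁻¹ = 1) {f g : α → β → ℝ≥0∞}
    (hf : ∀ y, Measurable (f · y)) (hg : ∀ y, Measurable (g · y))
    (hf_norm : Measurable fun y => lpNormENN μ p (f · y))
    (hg_norm : Measurable fun y => lpNormENN μ p' (g · y)) :
    ∫⁻ y, ∫⁻ x, f x y * g x y ∂μ ∂ν ≤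
      lpNormENN ν q (fun y => lpNormENN μ p (f · y)) *
        lpNormENN ν q' (fun y => lpNormENN μ p' (g · y)) :=
  calc ∫⁻ y, ∫⁻ x, f x y * g x y ∂μ ∂ν
      ≤ ∫⁻ y, lpNormENN μ p (f · y) * lpNormENN μ p' (g · y) ∂ν :=
        lintegral_mono fun y => lintegral_mul_le_lpNormENN_mul_lpNormENN hp (hf y) (hg y)
    _ ≤ _ := lintegral_mul_le_lpNormENN_mul_lpNormENN hq hf_norm hg_norm

lemma essSup_eq_iSup_of_continuous [TopologicalSpace α] [μ.IsOpenPosMeasure] {f : α → ℝ≥0∞}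
    (hf : Continuous f) : essSup f μ = ⨆ x, f x :=
  (iSup_eq_essSup fun x _ hx => (isOpen_lt continuous_const hf).measure_ne_zero μ ⟨x, hx⟩).symm

lemma measurable_lpNormENN_of_continuous [TopologicalSpace α] [OpensMeasurableSpace α]
    [SecondCountableTopology α] [TopologicalSpace β] [OpensMeasurableSpace β] [SFinite μ]
    [μ.IsOpenPosMeasure] (p : ℝ≥0∞) {f : α → β → ℝ≥0∞} (hf : Continuous (Function.uncurry f)) :
    Measurable fun y => lpNormENN μ p (f · y) := by
  unfold lpNormENN
  split_ifs
  · have hsup : ∀ y, essSup (f · y) μ = ⨆ x, f x y := fun y =>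
      essSup_eq_iSup_of_continuous (hf.comp (Continuous.prodMk_left y))
    simp_rw [hsup]
    exact (lowerSemicontinuous_iSup fun x =>
      (hf.comp (Continuous.prodMk_right x)).lowerSemicontinuous).measurable
  · exact (hf.measurable.pow_const _).lintegral_prod_left'.pow_const _

end MixedNorm

section Decay

lemma exists_one_add_pow_mul_exp_neg_mul_sq_le (m : ℕ) {c : ℝ} (hc : 0 < c) :
    ∃ B : ℝ, 0 < B ∧ ∀ x : ℝ, 0 ≤ x → (1 + x) ^ m * Real.exp (-(c * x ^ 2)) ≤ B := by
  refine ⟨m.factorial * Real.exp (1 + 1 / (4 * c)), by positivity, fun x hx => ?_⟩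
  have hpow : (1 + x) ^ m ≤ m.factorial * Real.exp (1 + x) := by
    rw [mul_comm, ← div_le_iff₀ (by positivity)]
    exact Real.pow_div_factorial_le_exp (1 + x) (by linarith) m
  have hexponent : 1 + x + -(c * x ^ 2) ≤ 1 + 1 / (4 * c) := by
    have : x - c * x ^ 2 ≤ 1 / (4 * c) := by
      rw [le_div_iff₀ (by positivity)]
      nlinarith [sq_nonneg (2 * c * x - 1)]
    linarith
  calc (1 + x) ^ m * Real.exp (-(c * x ^ 2))
      ≤ m.factorial * Real.exp (1 + x) * Real.exp (-(c * x ^ 2)) := by gcongr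
    _ = m.factorial * Real.exp (1 + x + -(c * x ^ 2)) := by rw [mul_assoc, ← Real.exp_add]
    _ ≤ m.factorial * Real.exp (1 + 1 / (4 * c)) := by gcongr

lemma one_add_mul_norm_pow_le {E : Type*} [SeminormedAddCommGroup E] {r : ℝ} (hr₀ : 0 ≤ r)
    (hr₁ : r ≤ 1) (N : ℕ) (x z : E) :
    (1 + r * ‖x‖) ^ N ≤ (1 + r * ‖z‖) ^ N * (1 + ‖z - x‖) ^ N := by
  rw [← mul_pow]
  gcongr
  have htriangle : r * ‖x‖ ≤ r * (‖z‖ + ‖z - x‖) := by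
    gcongr
    simpa using norm_sub_le z (z - x)
  have hcontract : r * ‖z - x‖ ≤ ‖z - x‖ := mul_le_of_le_one_left (norm_nonneg _) hr₁
  have hcross : 0 ≤ r * ‖z‖ * ‖z - x‖ := by positivity
  linarith

lemma exists_exp_neg_sq_mul_inv_one_add_norm_pow_le (E : Type*) [SeminormedAddCommGroup E]
    (N : ℕ) :
    ∃ B : ℝ, 0 < B ∧ ∀ r : ℝ, 0 ≤ r → r ≤ 1 → ∀ x z : E,
      Real.exp (-(1 / 2 * (r * ‖z‖) ^ 2)) * ((1 + ‖z - x‖) ^ N)⁻¹ ≤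
        B * ((1 + r * ‖x‖) ^ N)⁻¹ := by
  obtain ⟨B, hB_pos, hB⟩ := exists_one_add_pow_mul_exp_neg_mul_sq_le N (one_half_pos (α := ℝ))
  refine ⟨B, hB_pos, fun r hr₀ hr₁ x z => ?_⟩
  rw [← div_eq_mul_inv, ← div_eq_mul_inv, div_le_div_iff₀ (by positivity) (by positivity)]
  calc Real.exp (-(1 / 2 * (r * ‖z‖) ^ 2)) * (1 + r * ‖x‖) ^ N
      ≤ Real.exp (-(1 / 2 * (r * ‖z‖) ^ 2)) * ((1 + r * ‖z‖) ^ N * (1 + ‖z - x‖) ^ N) := by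
        gcongr
        exact one_add_mul_norm_pow_le hr₀ hr₁ N x z
    _ = (1 + r * ‖z‖) ^ N * Real.exp (-(1 / 2 * (r * ‖z‖) ^ 2)) * (1 + ‖z - x‖) ^ N := by ring
    _ ≤ B * (1 + ‖z - x‖) ^ N := by
        gcongr
        exact hB _ (by positivity)

lemma integrable_inv_one_add_norm_pow {E : Type*} [NormedAddCommGroup E] [NormedSpace ℝ E]
    [FiniteDimensional ℝ E] [MeasurableSpace E] [BorelSpace E] (μ : Measure E)
    [μ.IsAddHaarMeasure] {N : ℕ} (hN : Module.finrank ℝ E < N) :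
    Integrable (fun x : E => ((1 + ‖x‖) ^ N)⁻¹) μ := by
  refine (integrable_one_add_norm (μ := μ) (r := N) (by exact_mod_cast hN)).congr
    (Eventually.of_forall fun x => ?_)
  simp only [Real.rpow_neg (show 0 ≤ 1 + ‖x‖ by positivity), Real.rpow_natCast]

lemma exists_norm_schwartz_le_inv_one_add_norm_pow {E F : Type*} [NormedAddCommGroup E]
    [NormedSpace ℝ E] [NormedAddCommGroup F] [NormedSpace ℝ F] (f : SchwartzMap E F) (N : ℕ) :
    ∃ K : ℝ, 0 ≤ K ∧ ∀ z, ‖f z‖ ≤ K * ((1 + ‖z‖) ^ N)⁻¹ := by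
  refine ⟨2 ^ N * ((Finset.Iic (N, 0)).sup fun m => SchwartzMap.seminorm ℝ m.1 m.2) f,
    by positivity, fun z => ?_⟩
  rw [← div_eq_mul_inv, le_div_iff₀ (by positivity), mul_comm]
  simpa only [norm_iteratedFDeriv_zero] using SchwartzMap.one_add_le_sup_seminorm_apply (𝕜 := ℝ)
    (m := (N, 0)) le_rfl le_rfl f z

end Decay

section ExpNeg

variable {E : Type*} [NormedAddCommGroup E] [NormedSpace ℝ E] {Q : E → ℝ}

lemma exists_norm_iteratedFDeriv_exp_neg_le (hQ : Q.HasTemperateGrowth) (n : ℕ) :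
    ∃ (l : ℕ) (K : ℝ), 0 ≤ K ∧ ∀ x, ‖iteratedFDeriv ℝ n (fun x => Real.exp (-Q x)) x‖ ≤
      K * (1 + ‖x‖) ^ l * Real.exp (-Q x) := by
  obtain ⟨l, K, hK, hQ_bound⟩ := hQ.neg.norm_iteratedFDeriv_le_uniform n
  refine ⟨l * n, n.factorial * (1 + K) ^ n, by positivity, fun x => ?_⟩
  have hpoly : 1 ≤ (1 + ‖x‖) ^ l := one_le_pow₀ (by linarith [norm_nonneg x])
  have hexp_deriv : ∀ i ≤ n, ‖iteratedFDeriv ℝ i Real.exp (-Q x)‖ ≤ Real.exp (-Q x) := fun i _ => by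
    rw [norm_iteratedFDeriv_eq_norm_iteratedDeriv, iteratedDeriv_eq_iterate, Real.iter_deriv_exp,
      Real.norm_of_nonneg (Real.exp_pos _).le]
  have hQ_deriv : ∀ i, 1 ≤ i → i ≤ n →
      ‖iteratedFDeriv ℝ i (-Q) x‖ ≤ ((1 + K) * (1 + ‖x‖) ^ l) ^ i := fun i hi hin =>
    calc ‖iteratedFDeriv ℝ i (-Q) x‖ ≤ K * (1 + ‖x‖) ^ l := hQ_bound i hin x
      _ ≤ (1 + K) * (1 + ‖x‖) ^ l := by gcongr; linarith
      _ ≤ ((1 + K) * (1 + ‖x‖) ^ l) ^ i := le_self_pow₀ (by nlinarith) (by omega)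
  calc ‖iteratedFDeriv ℝ n (Real.exp ∘ (-Q)) x‖
      ≤ n.factorial * Real.exp (-Q x) * ((1 + K) * (1 + ‖x‖) ^ l) ^ n :=
        norm_iteratedFDeriv_comp_le Real.contDiff_exp
          (hQ.neg.1.of_le (by exact_mod_cast le_top)) le_rfl x hexp_deriv hQ_deriv
    _ = n.factorial * (1 + K) ^ n * (1 + ‖x‖) ^ (l * n) * Real.exp (-Q x) := by
        rw [mul_pow, ← pow_mul]
        ring

lemma exists_norm_pow_mul_norm_iteratedFDeriv_exp_neg_le (hQ : Q.HasTemperateGrowth) {c : ℝ}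
    (hc : 0 < c) (hQ_coercive : ∀ x, c * ‖x‖ ^ 2 ≤ Q x) (k n : ℕ) :
    ∃ C : ℝ, ∀ x, ‖x‖ ^ k * ‖iteratedFDeriv ℝ n (fun x => Real.exp (-Q x)) x‖ ≤ C := by
  obtain ⟨l, K, hK, hderiv⟩ := exists_norm_iteratedFDeriv_exp_neg_le hQ n
  obtain ⟨B, -, hB⟩ := exists_one_add_pow_mul_exp_neg_mul_sq_le (k + l) hc
  refine ⟨K * B, fun x => ?_⟩
  calc ‖x‖ ^ k * ‖iteratedFDeriv ℝ n (fun x => Real.exp (-Q x)) x‖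
      ≤ (1 + ‖x‖) ^ k * (K * (1 + ‖x‖) ^ l * Real.exp (-(c * ‖x‖ ^ 2))) := by
        gcongr
        · linarith
        · refine (hderiv x).trans ?_
          gcongr
          exact hQ_coercive x
    _ = K * ((1 + ‖x‖) ^ (k + l) * Real.exp (-(c * ‖x‖ ^ 2))) := by ring
    _ ≤ K * B := by
        gcongr
        exact hB _ (norm_nonneg x)

/-- The Schwartz function `exp (-Q)` for a coercive `Q` of temperate growth; the case of a positive
definite quadratic form `Q` gives the Gaussians. -/
noncomputable def expNegSchwartz (hQ : Q.HasTemperateGrowth) {c : ℝ} (hc : 0 < c)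
    (hQ_coercive : ∀ x, c * ‖x‖ ^ 2 ≤ Q x) : SchwartzMap E ℝ where
  toFun x := Real.exp (-Q x)
  smooth' := Real.contDiff_exp.comp hQ.neg.1
  decay' := exists_norm_pow_mul_norm_iteratedFDeriv_exp_neg_le hQ hc hQ_coercive

end ExpNeg

section SymplecticForm

variable {d : ℕ}

instance isAddHaarMeasure_volume_phS (d : ℕ) : (volume : Measure (PhS d)).IsAddHaarMeasure := by
  rw [Measure.volume_eq_prod]
  infer_instance

instance isNegInvariant_volume_phS (d : ℕ) : (volume : Measure (PhS d)).IsNegInvariant :=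
  Measure.IsAddHaarMeasure.isNegInvariant_of_regular _

lemma symplForm_swap (X Y : PhS d) : symplForm X Y = -symplForm Y X := by
  rw [symplForm, symplForm, real_inner_comm X.2, real_inner_comm Y.2]
  ring

lemma symplForm_add_right (X Y Z : PhS d) :
    symplForm X (Y + Z) = symplForm X Y + symplForm X Z := by
  simp only [symplForm, Prod.fst_add, Prod.snd_add, inner_add_left, inner_add_right]
  ring

lemma symplForm_smul_right (c : ℝ) (X Y : PhS d) : symplForm X (c • Y) = c * symplForm X Y := by
  simp only [symplForm, Prod.smul_fst, Prod.smul_snd, real_inner_smul_left, real_inner_smul_right]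
  ring

lemma symplForm_neg_left (X Y : PhS d) : symplForm (-X) Y = -symplForm X Y := by
  simp only [symplForm, Prod.fst_neg, Prod.snd_neg, inner_neg_left, inner_neg_right]
  ring

lemma symplForm_sub_left (X Y Z : PhS d) :
    symplForm (X - Y) Z = symplForm X Z - symplForm Y Z := by
  simp only [symplForm, Prod.fst_sub, Prod.snd_sub, inner_sub_left, inner_sub_right]
  ring

lemma symplForm_self (X : PhS d) : symplForm X X = 0 :=
  self_eq_neg.1 (symplForm_swap X X)

@[fun_prop]
lemma continuous_symplForm {T : Type*} [TopologicalSpace T] {f g : T → PhS d} (hf : Continuous f)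
    (hg : Continuous g) : Continuous fun t => symplForm (f t) (g t) := by
  unfold symplForm
  fun_prop

lemma norm_cexp_two_mul_I_mul_ofReal (t : ℝ) : ‖Complex.exp (2 * Complex.I * t)‖ = 1 := by
  simp [Complex.norm_exp]

lemma conj_cexp_two_mul_I_mul_ofReal (t : ℝ) :
    starRingEnd ℂ (Complex.exp (2 * Complex.I * t)) = Complex.exp (2 * Complex.I * (-t : ℝ)) := by
  rw [← Complex.exp_conj]
  simp [Complex.conj_ofReal, map_ofNat]

end SymplecticForm

section SymplecticFourier

open scoped FourierTransform

variable {d : ℕ}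

lemma symplFT_conj_comp_sub (Φ : PhS d → ℂ) (X Y : PhS d) :
    symplFT d (fun Z => starRingEnd ℂ (Φ (Z - X))) Y =
      Complex.exp (2 * Complex.I * symplForm Y X) * starRingEnd ℂ (symplFT d Φ (-Y)) := by
  simp only [symplFT]
  rw [← integral_add_right_eq_self (μ := volume) _ X, map_mul, ← integral_conj, map_inv₀, map_pow,
    Complex.conj_ofReal, mul_left_comm, ← integral_const_mul (Complex.exp _)]
  congr 2 with Z
  rw [map_mul, conj_cexp_two_mul_I_mul_ofReal, symplForm_neg_left, neg_neg, symplForm_add_right,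
    add_sub_cancel_right, Complex.ofReal_add, mul_add, Complex.exp_add]
  ring

lemma symplFT_symplFT_mul {a b : PhS d → ℂ} (ha : Integrable a) (hb : Integrable b)
    (Y : PhS d) :
    symplFT d (fun Z => symplFT d a Z * b Z) Y =
      ((Real.pi : ℂ) ^ d)⁻¹ * ∫ W, a W * symplFT d b (Y - W) := by
  have hphase : ∀ Z W, Complex.exp (2 * Complex.I * symplForm Z W) *
      Complex.exp (2 * Complex.I * symplForm Y Z) =
        Complex.exp (2 * Complex.I * symplForm (Y - W) Z) := fun Z W => by
    rw [symplForm_swap Z W, symplForm_sub_left, ← Complex.exp_add]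
    congr 1
    push_cast
    ring
  have hint : Integrable (Function.uncurry fun Z W => ((Real.pi : ℂ) ^ d)⁻¹ *
      (b Z * a W * Complex.exp (2 * Complex.I * symplForm (Y - W) Z))) :=
    ((hb.mul_prod ha).mul_bdd (c := 1) (by fun_prop) (Eventually.of_forall fun P =>
      (norm_cexp_two_mul_I_mul_ofReal _).le)).const_mul _
  calc symplFT d (fun Z => symplFT d a Z * b Z) Y
      = ((Real.pi : ℂ) ^ d)⁻¹ * ∫ Z, ∫ W, ((Real.pi : ℂ) ^ d)⁻¹ *
          (b Z * a W * Complex.exp (2 * Complex.I * symplForm (Y - W) Z)) := by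
        rw [symplFT]
        congr 2 with Z
        rw [integral_const_mul, symplFT, mul_assoc, mul_assoc, ← integral_mul_const]
        congr 2 with W
        rw [← hphase]
        ring
    _ = ((Real.pi : ℂ) ^ d)⁻¹ * ∫ W, ∫ Z, ((Real.pi : ℂ) ^ d)⁻¹ *
          (b Z * a W * Complex.exp (2 * Complex.I * symplForm (Y - W) Z)) := by
        rw [integral_integral_swap hint]
    _ = ((Real.pi : ℂ) ^ d)⁻¹ * ∫ W, a W * symplFT d b (Y - W) := by
        congr 2 with W
        rw [integral_const_mul, symplFT, mul_left_comm, ← integral_const_mul (a W)]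
        congr 2 with Z
        ring

/-- The rescaled rotation `X = (x, ξ) ↦ π⁻¹ (-ξ, x)` turning symplectic into Euclidean frequencies:
`2 σ(X, Y) = -2π ⟨Y, symplFrequency d X⟩`. -/
noncomputable def symplFrequency (d : ℕ) : PhS d ≃L[ℝ] PhS d :=
  LinearEquiv.toContinuousLinearEquiv
    { toFun X := Real.pi⁻¹ • (-X.2, X.1)
      invFun X := Real.pi • (X.2, -X.1)
      map_add' X Y := by ext <;> simp [add_comm]
      map_smul' c X := by ext <;> simp [mul_left_comm]
      left_inv X := by ext <;> simp [Real.pi_ne_zero]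
      right_inv X := by ext <;> simp [Real.pi_ne_zero] }

lemma symplFrequency_apply (X : PhS d) : symplFrequency d X = Real.pi⁻¹ • (-X.2, X.1) := rfl

/-- The phase space with its Euclidean norm, on which Mathlib's Fourier transform is defined. -/
noncomputable def euclideanPhS (d : ℕ) :
    WithLp 2 (EuclideanSpace ℝ (Fin d) × EuclideanSpace ℝ (Fin d)) ≃L[ℝ] PhS d :=
  WithLp.prodContinuousLinearEquiv 2 ℝ _ _

lemma measurePreserving_euclideanPhS (d : ℕ) : MeasurePreserving (euclideanPhS d) :=
  WithLp.volume_preserving_ofLp _ _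

lemma integral_comp_euclideanPhS {F : Type*} [NormedAddCommGroup F] [NormedSpace ℝ F]
    (f : PhS d → F) : ∫ Z, f (euclideanPhS d Z) = ∫ X, f X :=
  (measurePreserving_euclideanPhS d).integral_comp
    (euclideanPhS d).toHomeomorph.measurableEmbedding f

lemma inner_euclideanPhS_symm_symplFrequency (X : PhS d)
    (Z : WithLp 2 (EuclideanSpace ℝ (Fin d) × EuclideanSpace ℝ (Fin d))) :
    inner ℝ Z ((euclideanPhS d).symm (symplFrequency d X)) =
      -(Real.pi⁻¹ * symplForm X (euclideanPhS d Z)) := by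
  have hsymm : WithLp.ofLp ((euclideanPhS d).symm (symplFrequency d X)) = Real.pi⁻¹ • (-X.2, X.1) :=
    rfl
  have hZ : euclideanPhS d Z = Z.ofLp := rfl
  rw [WithLp.prod_inner_apply, hsymm, hZ, symplForm]
  simp only [Prod.smul_fst, Prod.smul_snd, real_inner_smul_right, inner_neg_right]
  rw [real_inner_comm X.1]
  ring

lemma integral_comp_symplFrequency (f : PhS d → ℝ) :
    ∫ X, f (symplFrequency d X) = (Real.pi ^ d) ^ 2 * ∫ X, f X := by
  have hrotation : MeasurePreserving fun X : PhS d => (-X.2, X.1) :=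
    ((Measure.measurePreserving_neg volume).prod (.id volume)).comp Measure.measurePreserving_swap
  have hembedding : MeasurableEmbedding fun X : PhS d => (-X.2, X.1) :=
    ((Homeomorph.prodComm _ _).trans
      ((Homeomorph.neg _).prodCongr (Homeomorph.refl _))).measurableEmbedding
  simp_rw [symplFrequency_apply]
  rw [hrotation.integral_comp hembedding fun X => f (Real.pi⁻¹ • X),
    Measure.integral_comp_inv_smul_of_nonneg volume f Real.pi_pos.le, Module.finrank_prod,
    finrank_euclideanSpace_fin, smul_eq_mul, ← two_mul, mul_comm 2 d, pow_mul]

/-- The symplectic Fourier transform of a Schwartz function, as a Schwartz function. -/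
noncomputable def symplFourier (f : SchwartzMap (PhS d) ℂ) : SchwartzMap (PhS d) ℂ :=
  ((Real.pi : ℂ) ^ d)⁻¹ • SchwartzMap.compCLMOfContinuousLinearEquiv ℝ
    ((symplFrequency d).trans (euclideanPhS d).symm)
    (𝓕 (SchwartzMap.compCLMOfContinuousLinearEquiv ℝ (euclideanPhS d) f))

lemma symplFourier_apply (f : SchwartzMap (PhS d) ℂ) (X : PhS d) :
    symplFourier f X = ((Real.pi : ℂ) ^ d)⁻¹ *
      𝓕 (SchwartzMap.compCLMOfContinuousLinearEquiv ℝ (euclideanPhS d) f)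
        ((euclideanPhS d).symm (symplFrequency d X)) :=
  rfl

lemma coe_symplFourier (f : SchwartzMap (PhS d) ℂ) : ⇑(symplFourier f) = symplFT d f := by
  funext X
  rw [symplFourier_apply, SchwartzMap.fourier_coe, Real.fourier_eq', symplFT,
    ← integral_comp_euclideanPhS]
  congr 2 with Z
  rw [inner_euclideanPhS_symm_symplFrequency, smul_eq_mul, mul_comm]
  refine congrArg₂ (· * ·) rfl (congrArg Complex.exp ?_)
  have : (Real.pi : ℂ) ≠ 0 := by exact_mod_cast Real.pi_ne_zero
  push_cast
  field_simp

lemma norm_inv_pi_pow (d : ℕ) : ‖((Real.pi : ℂ) ^ d)⁻¹‖ = (Real.pi ^ d)⁻¹ := by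
  rw [norm_inv, norm_pow, Complex.norm_of_nonneg Real.pi_pos.le]

lemma integral_norm_sq_symplFourier (f : SchwartzMap (PhS d) ℂ) :
    ∫ X, ‖symplFourier f X‖ ^ 2 = ∫ X, ‖f X‖ ^ 2 := by
  set g := SchwartzMap.compCLMOfContinuousLinearEquiv ℝ (euclideanPhS d) f
  calc ∫ X, ‖symplFourier f X‖ ^ 2
      = ((Real.pi ^ d)⁻¹) ^ 2 *
          ∫ X, ‖𝓕 g ((euclideanPhS d).symm (symplFrequency d X))‖ ^ 2 := by
        simp_rw [symplFourier_apply, norm_mul, norm_inv_pi_pow, mul_pow]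
        rw [integral_const_mul]
    _ = ∫ X, ‖𝓕 g ((euclideanPhS d).symm X)‖ ^ 2 := by
        rw [integral_comp_symplFrequency fun X => ‖𝓕 g ((euclideanPhS d).symm X)‖ ^ 2,
          ← mul_assoc, ← mul_pow, inv_mul_cancel₀ (by positivity), one_pow, one_mul]
    _ = ∫ Z, ‖𝓕 g Z‖ ^ 2 := by
        rw [← integral_comp_euclideanPhS]
        simp only [ContinuousLinearEquiv.symm_apply_apply]
    _ = ∫ Z, ‖g Z‖ ^ 2 := SchwartzMap.integral_norm_sq_fourier g
    _ = ∫ X, ‖f X‖ ^ 2 := integral_comp_euclideanPhS fun X => ‖f X‖ ^ 2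

end SymplecticFourier

section ShortTimeFourier

variable {d : ℕ}

lemma symplSTFT_eq_symplFT (Φ a : PhS d → ℂ) (X Y : PhS d) :
    symplSTFT d Φ a X Y = symplFT d (fun Z => a Z * starRingEnd ℂ (Φ (Z - X))) Y :=
  rfl

lemma symplSTFT_const_mul (Φ a : PhS d → ℂ) (c : ℂ) (X Y : PhS d) :
    symplSTFT d Φ (fun Z => c * a Z) X Y = c * symplSTFT d Φ a X Y := by
  simp only [symplSTFT, mul_assoc c]
  rw [integral_const_mul, mul_left_comm]

lemma symplSTFT_symplFT {Φ a : PhS d → ℂ} (hΦ : Integrable Φ) (ha : Integrable a)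
    (X Y : PhS d) :
    symplSTFT d Φ (symplFT d a) X Y =
      Complex.exp (2 * Complex.I * symplForm Y X) * symplSTFT d (symplFT d Φ) a Y X := by
  have hwindow : Integrable fun Z => starRingEnd ℂ (Φ (Z - X)) :=
    Complex.conjLIE.integrable_comp_iff.2 (hΦ.comp_sub_right X)
  rw [symplSTFT_eq_symplFT, symplFT_symplFT_mul ha hwindow, symplSTFT, mul_left_comm,
    ← integral_const_mul (Complex.exp _)]
  congr 2 with W
  rw [symplFT_conj_comp_sub, neg_sub, symplForm_sub_left, symplForm_swap X W, Complex.ofReal_sub,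
    sub_eq_add_neg, ← Complex.ofReal_neg, mul_add, Complex.exp_add]
  ring

/-- The Schwartz function `a` localized around `X` by the window `Φ`, that is
`Z ↦ a Z * conj (Φ (Z - X))`. -/
noncomputable def windowedSchwartz (Φ a : SchwartzMap (PhS d) ℂ) (X : PhS d) :
    SchwartzMap (PhS d) ℂ :=
  SchwartzMap.pairing (ContinuousLinearMap.mul ℂ ℂ) a (SchwartzMap.compSubConstCLM ℂ X
    (SchwartzMap.postcompCLM (𝕜 := ℝ) (Complex.conjCLE : ℂ →L[ℝ] ℂ) Φ))

lemma windowedSchwartz_apply (Φ a : SchwartzMap (PhS d) ℂ) (X Z : PhS d) :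
    windowedSchwartz Φ a X Z = a Z * starRingEnd ℂ (Φ (Z - X)) := by
  simp [windowedSchwartz, SchwartzMap.pairing_apply_apply, SchwartzMap.postcompCLM_apply]

lemma symplSTFT_eq_symplFourier (Φ a : SchwartzMap (PhS d) ℂ) (X Y : PhS d) :
    symplSTFT d Φ a X Y = symplFourier (windowedSchwartz Φ a X) Y := by
  simp only [coe_symplFourier, symplSTFT_eq_symplFT, symplFT, windowedSchwartz_apply]

lemma continuous_symplSTFT (Φ a : SchwartzMap (PhS d) ℂ) :
    Continuous (Function.uncurry (symplSTFT d Φ a)) := by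
  obtain ⟨K, -, hK⟩ := exists_norm_schwartz_le_inv_one_add_norm_pow Φ 0
  have ha : Continuous a := a.continuous
  have hΦ : Continuous Φ := Φ.continuous
  have : Continuous (starRingEnd ℂ) := Complex.continuous_conj
  refine continuous_const.mul (continuous_of_dominated (bound := fun Z => ‖a Z‖ * K)
    (fun P => ?_) (fun P => Eventually.of_forall fun Z => ?_) (a.integrable.norm.mul_const K)
    (Eventually.of_forall fun Z => ?_))
  · exact Continuous.aestronglyMeasurable (by fun_prop)
  · rw [norm_mul, norm_mul, norm_cexp_two_mul_I_mul_ofReal, mul_one, RCLike.norm_conj]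
    gcongr
    simpa using hK (Z - P.1)
  · fun_prop

lemma lintegral_enorm_sq_schwartz {E F : Type*} [NormedAddCommGroup E] [NormedSpace ℝ E]
    [MeasurableSpace E] [BorelSpace E] [SecondCountableTopology E] [NormedAddCommGroup F]
    [NormedSpace ℝ F] (μ : Measure E) [μ.HasTemperateGrowth] (f : SchwartzMap E F) :
    ∫⁻ x, ‖f x‖ₑ ^ 2 ∂μ = ENNReal.ofReal (∫ x, ‖f x‖ ^ 2 ∂μ) := by
  rw [ofReal_integral_eq_lintegral_ofReal ((f.memLp 2 μ).integrable_norm_pow two_ne_zero)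
    (Eventually.of_forall fun x => by positivity)]
  simp only [ENNReal.ofReal_pow (norm_nonneg _), ofReal_norm]

lemma integral_norm_sq_schwartz_pos {E F : Type*} [NormedAddCommGroup E] [NormedSpace ℝ E]
    [MeasurableSpace E] [BorelSpace E] [SecondCountableTopology E] [NormedAddCommGroup F]
    [NormedSpace ℝ F] (μ : Measure E) [μ.HasTemperateGrowth] [μ.IsOpenPosMeasure]
    {f : SchwartzMap E F} (hf : f ≠ 0) : 0 < ∫ x, ‖f x‖ ^ 2 ∂μ := by
  obtain ⟨x, hx⟩ := DFunLike.ne_iff.1 hf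
  have hcont : Continuous fun x => ‖f x‖ ^ 2 := f.continuous.norm.pow 2
  exact integral_pos_of_integrable_nonneg_nonzero (x := x) hcont
    ((f.memLp 2 μ).integrable_norm_pow two_ne_zero) (fun x => by positivity)
    (pow_ne_zero 2 (norm_ne_zero_iff.2 hx))

lemma lintegral_enorm_sq_symplSTFT (Φ a : SchwartzMap (PhS d) ℂ) (X : PhS d) :
    ∫⁻ Y, ‖symplSTFT d Φ a X Y‖ₑ ^ 2 = ∫⁻ Z, ‖a Z‖ₑ ^ 2 * ‖Φ (Z - X)‖ₑ ^ 2 := by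
  simp_rw [symplSTFT_eq_symplFourier]
  rw [lintegral_enorm_sq_schwartz, integral_norm_sq_symplFourier, ← lintegral_enorm_sq_schwartz]
  simp only [windowedSchwartz_apply, enorm_mul, mul_pow, RCLike.enorm_conj]

lemma lintegral_lintegral_enorm_sq_symplSTFT (Φ a : SchwartzMap (PhS d) ℂ) :
    ∫⁻ X, ∫⁻ Y, ‖symplSTFT d Φ a X Y‖ₑ ^ 2 =
      ENNReal.ofReal ((∫ Z, ‖a Z‖ ^ 2) * ∫ Z, ‖Φ Z‖ ^ 2) := by
  have ha : Measurable a := a.continuous.measurable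
  have hΦ : Measurable Φ := Φ.continuous.measurable
  calc ∫⁻ X, ∫⁻ Y, ‖symplSTFT d Φ a X Y‖ₑ ^ 2
      = ∫⁻ Z, ∫⁻ X, ‖a Z‖ₑ ^ 2 * ‖Φ (Z - X)‖ₑ ^ 2 := by
        simp_rw [lintegral_enorm_sq_symplSTFT]
        exact lintegral_lintegral_swap (by fun_prop)
    _ = ∫⁻ Z, ‖a Z‖ₑ ^ 2 * ∫⁻ X, ‖Φ X‖ₑ ^ 2 := by
        congr 1 with Z
        rw [lintegral_const_mul _ (by fun_prop),
          lintegral_sub_left_eq_self (μ := volume) (fun X => ‖Φ X‖ₑ ^ 2)]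
    _ = ENNReal.ofReal ((∫ Z, ‖a Z‖ ^ 2) * ∫ Z, ‖Φ Z‖ ^ 2) := by
        rw [lintegral_mul_const _ (by fun_prop), lintegral_enorm_sq_schwartz,
          lintegral_enorm_sq_schwartz, ENNReal.ofReal_mul (by positivity)]

end ShortTimeFourier

section ModulationNorm

variable {d : ℕ} {p q : ℝ≥0∞}

lemma modNorm_one (p q : ℝ≥0∞) (Φ a : PhS d → ℂ) :
    modNorm d p q (fun _ => 1) Φ a =
      lpNormENN volume q fun Y => lpNormENN volume p fun X => ‖symplSTFT d Φ a X Y‖ₑ := by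
  simp only [modNorm, mul_one, ofReal_norm]

lemma modNorm_one_const_mul (hp : p ≠ 0) (hq : q ≠ 0) (Φ a : PhS d → ℂ) (c : ℂ) :
    modNorm d p q (fun _ => 1) Φ (fun X => c * a X) = ‖c‖ₑ * modNorm d p q (fun _ => 1) Φ a := by
  simp only [modNorm_one, symplSTFT_const_mul, enorm_mul, lpNormENN_const_mul hp enorm_ne_top,
    lpNormENN_const_mul hq enorm_ne_top]

lemma ofReal_integral_norm_sq_mul_le_modNorm_mul_modNorm {p' q' : ℝ≥0∞} (hp : p⁻¹ + p'⁻¹ = 1)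
    (hq : q⁻¹ + q'⁻¹ = 1) (Φ a : SchwartzMap (PhS d) ℂ) :
    ENNReal.ofReal ((∫ Z, ‖a Z‖ ^ 2) * ∫ Z, ‖Φ Z‖ ^ 2) ≤
      modNorm d p q (fun _ => 1) Φ a * modNorm d p' q' (fun _ => 1) Φ a := by
  have hcont : Continuous (Function.uncurry fun X Y => ‖symplSTFT d Φ a X Y‖ₑ) :=
    (continuous_symplSTFT Φ a).enorm
  have hsection : ∀ Y, Measurable fun X => ‖symplSTFT d Φ a X Y‖ₑ := fun Y =>
    (hcont.comp (Continuous.prodMk_left Y)).measurable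
  rw [← lintegral_lintegral_enorm_sq_symplSTFT,
    lintegral_lintegral_swap (hcont.measurable.pow_const 2).aemeasurable, modNorm_one, modNorm_one]
  simp_rw [sq]
  exact lintegral_lintegral_mul_le_mixed_lpNormENN hp hq hsection hsection
    (measurable_lpNormENN_of_continuous p hcont) (measurable_lpNormENN_of_continuous p' hcont)

end ModulationNorm

lemma rpow_half_mul_rpow_half {x y z : ℝ} (hx : 0 ≤ x) (hy : 0 ≤ y) (hz : 0 ≤ z)
    (hxy : x * y = z ^ 2) (n : ℕ) : x ^ ((n : ℝ) / 2) * y ^ ((n : ℝ) / 2) = z ^ n := by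
  rw [← Real.mul_rpow hx hy, hxy, ← Real.rpow_natCast z 2, ← Real.rpow_mul hz, Nat.cast_ofNat,
    mul_div_cancel₀ _ two_ne_zero, Real.rpow_natCast]

lemma weylProd_apply {d : ℕ} (a b : PhS d → ℂ) (X : PhS d) :
    weylProd d a b X = ((Real.pi : ℂ) ^ d)⁻¹ *
      ∫ Y, a (X - Y) * symplFT d b Y * Complex.exp (2 * Complex.I * symplForm X Y) := by
  have hconst : (2 * Real.pi) ^ (-(d : ℝ) / 2) * (2 / Real.pi) ^ ((d : ℝ) / 2) =
      (Real.pi ^ d)⁻¹ := by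
    rw [neg_div, Real.rpow_neg (by positivity), ← Real.inv_rpow (by positivity), ← inv_pow]
    exact rpow_half_mul_rpow_half (by positivity) (by positivity) (by positivity)
      (by field_simp) d
  rw [weylProd, twistConv, ← mul_assoc, ← Complex.ofReal_mul, hconst]
  push_cast
  rfl

lemma integral_cexp_neg_mul_sq_norm_add_mul_inner {d : ℕ} {b : ℝ} (hb : 0 < b) (c : ℂ)
    (w : EuclideanSpace ℝ (Fin d)) :
    ∫ y, Complex.exp (-(b : ℂ) * ‖y‖ ^ 2 + c * ⟪w, y⟫) =
      ((Real.pi / b) ^ ((d : ℝ) / 2) : ℝ) * Complex.exp (c ^ 2 * ‖w‖ ^ 2 / (4 * b)) := by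
  rw [GaussianFourier.integral_cexp_neg_mul_sq_norm_add (by simpa using hb),
    finrank_euclideanSpace_fin, Complex.ofReal_cpow (by positivity)]
  push_cast
  rfl

section SqueezedGaussian

variable {d : ℕ} {s : ℝ}

/-- The quadratic form `s²|x|² + s⁻²|ξ|²` on phase space: `|X|²` squeezed by the symplectic map
`(x, ξ) ↦ (s x, s⁻¹ ξ)`. -/
noncomputable def squeezedForm (s : ℝ) (X : PhS d) : ℝ :=
  s ^ 2 * ‖X.1‖ ^ 2 + (s ^ 2)⁻¹ * ‖X.2‖ ^ 2

lemma hasTemperateGrowth_squeezedForm (s : ℝ) :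
    (squeezedForm (d := d) s).HasTemperateGrowth := by
  have hfst : Function.HasTemperateGrowth fun X : PhS d => X.1 :=
    (ContinuousLinearMap.fst ℝ (EuclideanSpace ℝ (Fin d))
      (EuclideanSpace ℝ (Fin d))).hasTemperateGrowth
  have hsnd : Function.HasTemperateGrowth fun X : PhS d => X.2 :=
    (ContinuousLinearMap.snd ℝ (EuclideanSpace ℝ (Fin d))
      (EuclideanSpace ℝ (Fin d))).hasTemperateGrowth
  have hfst_sq : Function.HasTemperateGrowth fun X : PhS d => ‖X.1‖ ^ 2 :=
    (Function.hasTemperateGrowth_norm_sq (H := EuclideanSpace ℝ (Fin d))).comp hfst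
  have hsnd_sq : Function.HasTemperateGrowth fun X : PhS d => ‖X.2‖ ^ 2 :=
    (Function.hasTemperateGrowth_norm_sq (H := EuclideanSpace ℝ (Fin d))).comp hsnd
  exact ((Function.HasTemperateGrowth.const (s ^ 2)).mul hfst_sq).add
    ((Function.HasTemperateGrowth.const (s ^ 2)⁻¹).mul hsnd_sq)

lemma min_mul_norm_sq_le_squeezedForm (s : ℝ) (X : PhS d) :
    min (s ^ 2) (s ^ 2)⁻¹ * ‖X‖ ^ 2 ≤ squeezedForm s X := by
  have hfst : min (s ^ 2) (s ^ 2)⁻¹ * ‖X.1‖ ^ 2 ≤ s ^ 2 * ‖X.1‖ ^ 2 := by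
    gcongr
    exact min_le_left _ _
  have hsnd : min (s ^ 2) (s ^ 2)⁻¹ * ‖X.2‖ ^ 2 ≤ (s ^ 2)⁻¹ * ‖X.2‖ ^ 2 := by
    gcongr
    exact min_le_right _ _
  rw [squeezedForm, Prod.norm_def]
  rcases max_choice ‖X.1‖ ‖X.2‖ with hmax | hmax <;> rw [hmax]
  · exact hfst.trans (le_add_of_nonneg_right (by positivity))
  · exact hsnd.trans (le_add_of_nonneg_left (by positivity))

lemma squeezedForm_sub_midpoint_add (s : ℝ) (X Y : PhS d) :
    squeezedForm s (X - (Y + (2 : ℝ)⁻¹ • X)) + squeezedForm s (Y + (2 : ℝ)⁻¹ • X) =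
      2⁻¹ * squeezedForm s X + 2 * squeezedForm s Y := by
  have hparallelogram : ∀ x y : EuclideanSpace ℝ (Fin d),
      ‖x - (y + (2 : ℝ)⁻¹ • x)‖ ^ 2 + ‖y + (2 : ℝ)⁻¹ • x‖ ^ 2 = 2⁻¹ * ‖x‖ ^ 2 + 2 * ‖y‖ ^ 2 := by
    intro x y
    rw [show x - (y + (2 : ℝ)⁻¹ • x) = (2 : ℝ)⁻¹ • x - y by module, add_comm y]
    have := parallelogram_law_with_norm ℝ ((2 : ℝ)⁻¹ • x) y
    rw [norm_smul, Real.norm_of_nonneg (by positivity)] at this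
    linarith
  simp only [squeezedForm, Prod.fst_sub, Prod.snd_sub, Prod.fst_add, Prod.snd_add, Prod.smul_fst,
    Prod.smul_snd]
  linear_combination s ^ 2 * hparallelogram X.1 Y.1 + (s ^ 2)⁻¹ * hparallelogram X.2 Y.2

/-- The Gaussian `exp (-(s²|x|² + s⁻²|ξ|²))` on phase space, as a Schwartz function. -/
noncomputable def squeezedGaussian (d : ℕ) (hs : 0 < s) : SchwartzMap (PhS d) ℂ :=
  SchwartzMap.postcompCLM (𝕜 := ℝ) Complex.ofRealCLM
    (expNegSchwartz (hasTemperateGrowth_squeezedForm s)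
      (show 0 < min (s ^ 2) (s ^ 2)⁻¹ by positivity) (min_mul_norm_sq_le_squeezedForm s))

lemma squeezedGaussian_apply (hs : 0 < s) (X : PhS d) :
    squeezedGaussian d hs X = (Real.exp (-squeezedForm s X) : ℂ) :=
  rfl

lemma norm_squeezedGaussian (hs : 0 < s) (X : PhS d) :
    ‖squeezedGaussian d hs X‖ = Real.exp (-squeezedForm s X) := by
  rw [squeezedGaussian_apply, Complex.norm_of_nonneg (Real.exp_pos _).le]

lemma integral_exp_neg_mul_squeezedForm_mul_cexp_symplForm {t : ℝ} (hs : 0 < s) (ht : 0 < t)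
    (X : PhS d) :
    ∫ Y : PhS d, (Real.exp (-(t * squeezedForm s Y)) : ℂ) *
        Complex.exp (2 * Complex.I * symplForm X Y) =
      (Real.pi / t : ℂ) ^ d * (Real.exp (-(t⁻¹ * squeezedForm s X)) : ℂ) := by
  have hsplit : ∀ Y : PhS d, (Real.exp (-(t * squeezedForm s Y)) : ℂ) *
      Complex.exp (2 * Complex.I * symplForm X Y) =
        Complex.exp (-((t * s ^ 2 : ℝ) : ℂ) * ‖Y.1‖ ^ 2 + 2 * Complex.I * ⟪X.2, Y.1⟫) *
        Complex.exp (-((t * (s ^ 2)⁻¹ : ℝ) : ℂ) * ‖Y.2‖ ^ 2 +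
          -(2 * Complex.I) * ⟪X.1, Y.2⟫) := by
    intro Y
    rw [Complex.ofReal_exp, ← Complex.exp_add, ← Complex.exp_add, squeezedForm, symplForm,
      real_inner_comm]
    congr 1
    push_cast
    ring
  have hconst : (Real.pi / (t * s ^ 2)) ^ ((d : ℝ) / 2) *
      (Real.pi / (t * (s ^ 2)⁻¹)) ^ ((d : ℝ) / 2) = (Real.pi / t) ^ d :=
    rpow_half_mul_rpow_half (by positivity) (by positivity) (by positivity) (by field_simp) d
  simp_rw [hsplit]
  rw [Measure.volume_eq_prod, integral_prod_mul
    (fun y => Complex.exp (-((t * s ^ 2 : ℝ) : ℂ) * ‖y‖ ^ 2 + 2 * Complex.I * ⟪X.2, y⟫))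
    (fun η => Complex.exp (-((t * (s ^ 2)⁻¹ : ℝ) : ℂ) * ‖η‖ ^ 2 + -(2 * Complex.I) * ⟪X.1, η⟫)),
    integral_cexp_neg_mul_sq_norm_add_mul_inner (by positivity),
    integral_cexp_neg_mul_sq_norm_add_mul_inner (by positivity), mul_mul_mul_comm,
    ← Complex.ofReal_mul, hconst, ← Complex.exp_add, Complex.ofReal_exp, Complex.ofReal_pow,
    Complex.ofReal_div]
  congr 2
  have hs' : (s : ℂ) ≠ 0 := by exact_mod_cast hs.ne'
  have ht' : (t : ℂ) ≠ 0 := by exact_mod_cast ht.ne'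
  simp only [squeezedForm, mul_pow, neg_sq, Complex.I_sq]
  push_cast
  field_simp
  ring

lemma symplFT_squeezedGaussian (hs : 0 < s) :
    symplFT d (squeezedGaussian d hs) = squeezedGaussian d hs := by
  funext X
  have hintegral := integral_exp_neg_mul_squeezedForm_mul_cexp_symplForm hs one_pos X
  simp only [one_mul, inv_one, Complex.ofReal_one, div_one] at hintegral
  simp only [symplFT, squeezedGaussian_apply]
  rw [hintegral, inv_mul_cancel_left₀ (pow_ne_zero _ (by exact_mod_cast Real.pi_ne_zero))]

lemma integral_norm_sq_squeezedGaussian (hs : 0 < s) :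
    ∫ X, ‖squeezedGaussian d hs X‖ ^ 2 = (Real.pi / 2) ^ d := by
  have hform : squeezedForm s (0 : PhS d) = 0 := by simp [squeezedForm]
  have hsympl : ∀ X : PhS d, symplForm 0 X = 0 := fun X => by simp [symplForm]
  have hnorm : ∀ X, ‖squeezedGaussian d hs X‖ ^ 2 = Real.exp (-(2 * squeezedForm s X)) := by
    intro X
    rw [norm_squeezedGaussian, ← Real.exp_nat_mul, Nat.cast_ofNat, mul_neg]
  have hintegral := integral_exp_neg_mul_squeezedForm_mul_cexp_symplForm hs two_pos (0 : PhS d)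
  simp only [hform, hsympl, Complex.ofReal_zero, mul_zero, Complex.exp_zero, mul_one, neg_zero,
    Real.exp_zero, Complex.ofReal_one, integral_complex_ofReal] at hintegral
  simp only [hnorm]
  exact_mod_cast hintegral

lemma squeezedGaussian_mul_squeezedGaussian_midpoint (hs : 0 < s) (X Y : PhS d) :
    squeezedGaussian d hs (X - (Y + (2 : ℝ)⁻¹ • X)) * squeezedGaussian d hs (Y + (2 : ℝ)⁻¹ • X) *
        Complex.exp (2 * Complex.I * symplForm X (Y + (2 : ℝ)⁻¹ • X)) =
      (Real.exp (-(2⁻¹ * squeezedForm s X)) : ℂ) *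
        ((Real.exp (-(2 * squeezedForm s Y)) : ℂ) *
          Complex.exp (2 * Complex.I * symplForm X Y)) := by
  rw [symplForm_add_right, symplForm_smul_right, symplForm_self, mul_zero, add_zero, ← mul_assoc]
  simp only [squeezedGaussian_apply]
  rw [← Complex.ofReal_mul, ← Complex.ofReal_mul, ← Real.exp_add, ← Real.exp_add, ← neg_add,
    ← neg_add, squeezedForm_sub_midpoint_add]

lemma weylProd_squeezedGaussian_self (hs : 0 < s) :
    weylProd d (squeezedGaussian d hs) (squeezedGaussian d hs) =
      fun X => ((2 : ℂ) ^ d)⁻¹ * squeezedGaussian d hs X := by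
  funext X
  have hexp : (Real.exp (-(2⁻¹ * squeezedForm s X)) : ℂ) *
      (Real.exp (-(2⁻¹ * squeezedForm s X)) : ℂ) = squeezedGaussian d hs X := by
    rw [squeezedGaussian_apply, ← Complex.ofReal_mul, ← Real.exp_add]
    ring_nf
  have hpi : (Real.pi : ℂ) ^ d ≠ 0 := pow_ne_zero _ (by exact_mod_cast Real.pi_ne_zero)
  rw [weylProd_apply, symplFT_squeezedGaussian,
    ← integral_add_right_eq_self (μ := volume) _ ((2 : ℝ)⁻¹ • X)]
  simp_rw [squeezedGaussian_mul_squeezedGaussian_midpoint]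
  rw [integral_const_mul, integral_exp_neg_mul_squeezedForm_mul_cexp_symplForm hs two_pos X,
    ← hexp, div_pow, Complex.ofReal_ofNat]
  field_simp

end SqueezedGaussian

section SqueezedWeight

variable {d N : ℕ} {s : ℝ}

/-- A weight concentrated on the box `|x| ≤ 1`, `|ξ| ≤ s` with polynomial decay of order `N`: up to
the factor `s⁻ᵈ`, the common profile in each variable of the short-time Fourier transforms of the
squeezed Gaussians with `s ≥ 1`. -/
noncomputable def squeezedWeight (N : ℕ) (s : ℝ) (X : PhS d) : ℝ :=
  ((1 + ‖X.1‖) ^ N)⁻¹ * ((1 + s⁻¹ * ‖X.2‖) ^ N)⁻¹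

lemma squeezedWeight_nonneg (N : ℕ) (hs : 0 ≤ s) (X : PhS d) : 0 ≤ squeezedWeight N s X := by
  unfold squeezedWeight
  positivity

lemma squeezedWeight_le_one (N : ℕ) (hs : 0 ≤ s) (X : PhS d) : squeezedWeight N s X ≤ 1 :=
  mul_le_one₀ (inv_le_one_of_one_le₀ (one_le_pow₀ (le_add_of_nonneg_right (norm_nonneg _))))
    (by positivity)
    (inv_le_one_of_one_le₀ (one_le_pow₀ (le_add_of_nonneg_right (by positivity))))

lemma squeezedWeight_mul_two (N : ℕ) (s : ℝ) (X : PhS d) :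
    squeezedWeight (N * 2) s X = squeezedWeight N s X ^ 2 := by
  simp only [squeezedWeight, mul_pow, inv_pow, pow_mul]

lemma one_add_mul_norm_pow_inv_eq_comp_smul {E : Type*} [NormedAddCommGroup E] [NormedSpace ℝ E]
    {r : ℝ} (hr : 0 ≤ r) (N : ℕ) :
    (fun x : E => ((1 + r * ‖x‖) ^ N)⁻¹) = fun x => ((1 + ‖r • x‖) ^ N)⁻¹ := by
  simp only [norm_smul, Real.norm_of_nonneg hr]

lemma integrable_squeezedWeight (hN : d < N) (hs : 0 < s) :
    Integrable (squeezedWeight (d := d) N s) := by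
  have hfst := integrable_inv_one_add_norm_pow (E := EuclideanSpace ℝ (Fin d)) volume
    (finrank_euclideanSpace_fin.trans_lt hN)
  have hsnd := (integrable_comp_smul_iff volume _ (inv_ne_zero hs.ne')).2 hfst
  rw [← one_add_mul_norm_pow_inv_eq_comp_smul (by positivity)] at hsnd
  exact hfst.mul_prod hsnd

lemma integral_squeezedWeight (N : ℕ) (hs : 0 ≤ s) :
    ∫ X : PhS d, squeezedWeight N s X =
      (∫ x : EuclideanSpace ℝ (Fin d), ((1 + ‖x‖) ^ N)⁻¹) ^ 2 * s ^ d := by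
  have hsnd := Measure.integral_comp_inv_smul_of_nonneg volume
    (fun x : EuclideanSpace ℝ (Fin d) => ((1 + ‖x‖) ^ N)⁻¹) hs
  rw [← one_add_mul_norm_pow_inv_eq_comp_smul (by positivity), finrank_euclideanSpace_fin,
    smul_eq_mul] at hsnd
  unfold squeezedWeight
  rw [Measure.volume_eq_prod, integral_prod_mul
    (fun x : EuclideanSpace ℝ (Fin d) => ((1 + ‖x‖) ^ N)⁻¹)
    (fun ξ : EuclideanSpace ℝ (Fin d) => ((1 + s⁻¹ * ‖ξ‖) ^ N)⁻¹), hsnd]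
  ring

lemma exists_lpNormENN_squeezedWeight_le (hN : d < N) {p : ℝ≥0∞} (hp : 1 ≤ p) :
    ∃ K : ℝ, 0 ≤ K ∧ ∀ s, 0 < s →
      lpNormENN volume p (fun X : PhS d => ENNReal.ofReal (squeezedWeight N s X)) ≤
        ENNReal.ofReal (K * s ^ (d * rcp p)) := by
  refine ⟨((∫ x : EuclideanSpace ℝ (Fin d), ((1 + ‖x‖) ^ N)⁻¹) ^ 2) ^ rcp p, by positivity,
    fun s hs => ?_⟩
  refine (lpNormENN_le_lintegral_rpow_rcp hp fun X =>
    ENNReal.ofReal_le_one.2 (squeezedWeight_le_one N hs.le X)).trans_eq ?_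
  rw [← ofReal_integral_eq_lintegral_ofReal (integrable_squeezedWeight hN hs)
      (Eventually.of_forall (squeezedWeight_nonneg N hs.le)), integral_squeezedWeight N hs.le,
    ENNReal.ofReal_rpow_of_nonneg (by positivity) (show 0 ≤ rcp p from ENNReal.toReal_nonneg),
    Real.mul_rpow (by positivity) (by positivity), Real.rpow_natCast_mul hs.le]

end SqueezedWeight

section ModulationNormSqueezedGaussian

variable {d N : ℕ}

lemma exp_neg_squeezedForm_le {s : ℝ} (hs : 1 ≤ s) (X : PhS d) :
    Real.exp (-squeezedForm s X) ≤ Real.exp (-(s ^ 2 / 2) * ‖X.1‖ ^ 2) *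
      (Real.exp (-(1 / 2 * (1 * ‖X.1‖) ^ 2)) * Real.exp (-(1 / 2 * (s⁻¹ * ‖X.2‖) ^ 2))) := by
  rw [← Real.exp_add, ← Real.exp_add, Real.exp_le_exp, squeezedForm, one_mul, mul_pow, inv_pow]
  have hfst : ‖X.1‖ ^ 2 ≤ s ^ 2 * ‖X.1‖ ^ 2 :=
    le_mul_of_one_le_left (by positivity) (one_le_pow₀ hs)
  have hsnd : 0 ≤ (s ^ 2)⁻¹ * ‖X.2‖ ^ 2 := by positivity
  linarith

lemma inv_one_add_norm_pow_three_mul_le (N : ℕ) (Z : PhS d) :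
    ((1 + ‖Z‖) ^ (3 * N))⁻¹ ≤
      ((1 + ‖Z.1‖) ^ N)⁻¹ * (((1 + ‖Z.2‖) ^ N)⁻¹ * ((1 + ‖Z.2‖) ^ N)⁻¹) := by
  rw [show 3 * N = N + (N + N) by ring, pow_add, pow_add, mul_inv, mul_inv]
  gcongr
  · exact norm_fst_le Z
  · exact norm_snd_le Z
  · exact norm_snd_le Z

lemma exists_exp_neg_squeezedForm_mul_inv_one_add_norm_pow_le (d N : ℕ) :
    ∃ B : ℝ, 0 ≤ B ∧ ∀ s, 1 ≤ s → ∀ X Z : PhS d,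
      Real.exp (-squeezedForm s Z) * ((1 + ‖Z - X‖) ^ (3 * N))⁻¹ ≤
        B * squeezedWeight N s X *
          (Real.exp (-(s ^ 2 / 2) * ‖Z.1‖ ^ 2) * ((1 + ‖Z.2 - X.2‖) ^ N)⁻¹) := by
  obtain ⟨B, hB, hBound⟩ :=
    exists_exp_neg_sq_mul_inv_one_add_norm_pow_le (EuclideanSpace ℝ (Fin d)) N
  refine ⟨B * B, by positivity, fun s hs X Z => ?_⟩
  have hfst := hBound 1 zero_le_one le_rfl X.1 Z.1
  have hsnd := hBound s⁻¹ (by positivity) (inv_le_one_of_one_le₀ hs) X.2 Z.2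
  calc Real.exp (-squeezedForm s Z) * ((1 + ‖Z - X‖) ^ (3 * N))⁻¹
      ≤ (Real.exp (-(s ^ 2 / 2) * ‖Z.1‖ ^ 2) *
          (Real.exp (-(1 / 2 * (1 * ‖Z.1‖) ^ 2)) * Real.exp (-(1 / 2 * (s⁻¹ * ‖Z.2‖) ^ 2)))) *
        (((1 + ‖Z.1 - X.1‖) ^ N)⁻¹ *
          (((1 + ‖Z.2 - X.2‖) ^ N)⁻¹ * ((1 + ‖Z.2 - X.2‖) ^ N)⁻¹)) :=
        mul_le_mul (exp_neg_squeezedForm_le hs Z) (inv_one_add_norm_pow_three_mul_le N (Z - X))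
          (by positivity) (by positivity)
    _ = (Real.exp (-(1 / 2 * (1 * ‖Z.1‖) ^ 2)) * ((1 + ‖Z.1 - X.1‖) ^ N)⁻¹) *
        (Real.exp (-(1 / 2 * (s⁻¹ * ‖Z.2‖) ^ 2)) * ((1 + ‖Z.2 - X.2‖) ^ N)⁻¹) *
        (Real.exp (-(s ^ 2 / 2) * ‖Z.1‖ ^ 2) * ((1 + ‖Z.2 - X.2‖) ^ N)⁻¹) := by ring
    _ ≤ (B * ((1 + 1 * ‖X.1‖) ^ N)⁻¹) * (B * ((1 + s⁻¹ * ‖X.2‖) ^ N)⁻¹) *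
        (Real.exp (-(s ^ 2 / 2) * ‖Z.1‖ ^ 2) * ((1 + ‖Z.2 - X.2‖) ^ N)⁻¹) := by gcongr
    _ = B * B * squeezedWeight N s X *
        (Real.exp (-(s ^ 2 / 2) * ‖Z.1‖ ^ 2) * ((1 + ‖Z.2 - X.2‖) ^ N)⁻¹) := by
      rw [squeezedWeight, one_mul]
      ring

lemma integrable_exp_neg_mul_sq_norm {E : Type*} [NormedAddCommGroup E] [InnerProductSpace ℝ E]
    [FiniteDimensional ℝ E] [MeasurableSpace E] [BorelSpace E] {b : ℝ} (hb : 0 < b) :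
    Integrable fun x : E => Real.exp (-b * ‖x‖ ^ 2) := by
  have hcexp := GaussianFourier.integrable_cexp_neg_mul_sq_norm_add (V := E)
    (show 0 < (b : ℂ).re from hb) 0 0
  refine hcexp.norm.congr (Eventually.of_forall fun x => ?_)
  simp only [zero_mul, add_zero, Complex.norm_exp]
  norm_cast

lemma integrable_exp_neg_mul_inv_one_add_norm_pow (hN : d < N) {b : ℝ} (hb : 0 < b)
    (ξ : EuclideanSpace ℝ (Fin d)) :
    Integrable fun Z : PhS d => Real.exp (-b * ‖Z.1‖ ^ 2) * ((1 + ‖Z.2 - ξ‖) ^ N)⁻¹ :=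
  (integrable_exp_neg_mul_sq_norm hb).mul_prod
    ((integrable_inv_one_add_norm_pow volume
      (finrank_euclideanSpace_fin.trans_lt hN)).comp_sub_right ξ)

lemma integral_exp_neg_mul_inv_one_add_norm_pow (N : ℕ) {s : ℝ} (hs : 0 < s)
    (ξ : EuclideanSpace ℝ (Fin d)) :
    ∫ Z : PhS d, Real.exp (-(s ^ 2 / 2) * ‖Z.1‖ ^ 2) * ((1 + ‖Z.2 - ξ‖) ^ N)⁻¹ =
      (2 * Real.pi) ^ ((d : ℝ) / 2) * (s ^ d)⁻¹ *
        ∫ x : EuclideanSpace ℝ (Fin d), ((1 + ‖x‖) ^ N)⁻¹ := by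
  have hpow : (s ^ 2) ^ ((d : ℝ) / 2) = s ^ d := by
    rw [← Real.rpow_natCast_mul hs.le, Nat.cast_ofNat, mul_div_cancel₀ _ two_ne_zero,
      Real.rpow_natCast]
  have hconst : (Real.pi / (s ^ 2 / 2)) ^ ((d : ℝ) / 2) =
      (2 * Real.pi) ^ ((d : ℝ) / 2) * (s ^ d)⁻¹ := by
    rw [eq_mul_inv_iff_mul_eq₀ (by positivity), ← hpow,
      ← Real.mul_rpow (by positivity) (by positivity)]
    congr 1
    field_simp
  rw [Measure.volume_eq_prod, integral_prod_mul
      (fun z : EuclideanSpace ℝ (Fin d) => Real.exp (-(s ^ 2 / 2) * ‖z‖ ^ 2))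
      (fun ζ : EuclideanSpace ℝ (Fin d) => ((1 + ‖ζ - ξ‖) ^ N)⁻¹),
    GaussianFourier.integral_rexp_neg_mul_sq_norm (by positivity), finrank_euclideanSpace_fin,
    integral_sub_right_eq_self (μ := volume)
      (fun ζ : EuclideanSpace ℝ (Fin d) => ((1 + ‖ζ‖) ^ N)⁻¹), hconst]

lemma exists_norm_symplSTFT_squeezedGaussian_le_left (hN : d < N) (Φ : SchwartzMap (PhS d) ℂ) :
    ∃ K : ℝ, 0 ≤ K ∧ ∀ s (hs : 1 ≤ s), ∀ X Y : PhS d,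
      ‖symplSTFT d Φ (squeezedGaussian d (one_pos.trans_le hs)) X Y‖ ≤
        K * (s ^ d)⁻¹ * squeezedWeight N s X := by
  obtain ⟨A, hA, hΦ⟩ := exists_norm_schwartz_le_inv_one_add_norm_pow Φ (3 * N)
  obtain ⟨B, hB, hdom⟩ := exists_exp_neg_squeezedForm_mul_inv_one_add_norm_pow_le d N
  set I := ∫ x : EuclideanSpace ℝ (Fin d), ((1 + ‖x‖) ^ N)⁻¹ with hI
  have : 0 ≤ I := integral_nonneg fun x => by positivity
  refine ⟨(Real.pi ^ d)⁻¹ * (A * B * ((2 * Real.pi) ^ ((d : ℝ) / 2) * I)), by positivity,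
    fun s hs X Y => ?_⟩
  have hs0 : 0 < s := one_pos.trans_le hs
  have hintegrand : ∀ Z, ‖squeezedGaussian d hs0 Z * (starRingEnd ℂ) (Φ (Z - X)) *
      Complex.exp (2 * Complex.I * symplForm Y Z)‖ ≤ A * (B * squeezedWeight N s X) *
        (Real.exp (-(s ^ 2 / 2) * ‖Z.1‖ ^ 2) * ((1 + ‖Z.2 - X.2‖) ^ N)⁻¹) := by
    intro Z
    rw [norm_mul, norm_mul, norm_cexp_two_mul_I_mul_ofReal, mul_one, norm_squeezedGaussian,
      RCLike.norm_conj, mul_assoc A]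
    calc Real.exp (-squeezedForm s Z) * ‖Φ (Z - X)‖
        ≤ Real.exp (-squeezedForm s Z) * (A * ((1 + ‖Z - X‖) ^ (3 * N))⁻¹) := by
          gcongr
          exact hΦ _
      _ = A * (Real.exp (-squeezedForm s Z) * ((1 + ‖Z - X‖) ^ (3 * N))⁻¹) := by ring
      _ ≤ _ := mul_le_mul_of_nonneg_left (hdom s hs X Z) hA
  have hintegral := norm_integral_le_of_norm_le
    ((integrable_exp_neg_mul_inv_one_add_norm_pow hN (by positivity) X.2).const_mul _)
    (Eventually.of_forall hintegrand)
  rw [integral_const_mul, integral_exp_neg_mul_inv_one_add_norm_pow N hs0, ← hI] at hintegral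
  rw [symplSTFT, norm_mul, norm_inv_pi_pow]
  refine (mul_le_mul_of_nonneg_left hintegral (by positivity)).trans_eq ?_
  ring

lemma exists_norm_symplSTFT_squeezedGaussian_le_right (hN : d < N) (Φ : SchwartzMap (PhS d) ℂ) :
    ∃ K : ℝ, 0 ≤ K ∧ ∀ s (hs : 1 ≤ s), ∀ X Y : PhS d,
      ‖symplSTFT d Φ (squeezedGaussian d (one_pos.trans_le hs)) X Y‖ ≤
        K * (s ^ d)⁻¹ * squeezedWeight N s Y := by
  obtain ⟨K, hK, hbound⟩ :=
    exists_norm_symplSTFT_squeezedGaussian_le_left hN (symplFourier Φ)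
  refine ⟨K, hK, fun s hs X Y => ?_⟩
  rw [← symplFT_squeezedGaussian, symplSTFT_symplFT Φ.integrable (SchwartzMap.integrable _),
    norm_mul, norm_cexp_two_mul_I_mul_ofReal, one_mul, ← coe_symplFourier]
  exact hbound s hs Y X

lemma exists_norm_symplSTFT_squeezedGaussian_le (hN : d < N) (Φ : SchwartzMap (PhS d) ℂ) :
    ∃ K : ℝ, 0 ≤ K ∧ ∀ s (hs : 1 ≤ s), ∀ X Y : PhS d,
      ‖symplSTFT d Φ (squeezedGaussian d (one_pos.trans_le hs)) X Y‖ ≤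
        K * (s ^ d)⁻¹ * squeezedWeight N s X * squeezedWeight N s Y := by
  have hN2 : d < N * 2 := by lia
  obtain ⟨K, hK, hleft⟩ := exists_norm_symplSTFT_squeezedGaussian_le_left hN2 Φ
  obtain ⟨L, hL, hright⟩ := exists_norm_symplSTFT_squeezedGaussian_le_right hN2 Φ
  refine ⟨√(K * L), Real.sqrt_nonneg _, fun s hs X Y => ?_⟩
  have hs0 : 0 ≤ s := zero_le_one.trans hs
  have hX := squeezedWeight_nonneg N hs0 X
  have hY := squeezedWeight_nonneg N hs0 Y
  refine le_of_sq_le_sq ?_ (by positivity)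
  calc ‖symplSTFT d Φ (squeezedGaussian d (one_pos.trans_le hs)) X Y‖ ^ 2
      ≤ (K * (s ^ d)⁻¹ * squeezedWeight (N * 2) s X) *
        (L * (s ^ d)⁻¹ * squeezedWeight (N * 2) s Y) := by
        rw [sq]
        exact mul_le_mul (hleft s hs X Y) (hright s hs X Y) (norm_nonneg _)
          ((norm_nonneg _).trans (hleft s hs X Y))
    _ = K * L * ((s ^ d)⁻¹ * squeezedWeight N s X * squeezedWeight N s Y) ^ 2 := by
        rw [squeezedWeight_mul_two, squeezedWeight_mul_two]
        ring
    _ = (√(K * L) * (s ^ d)⁻¹ * squeezedWeight N s X * squeezedWeight N s Y) ^ 2 := by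
        rw [mul_assoc (√(K * L)), mul_assoc (√(K * L)), mul_pow (√(K * L)),
          Real.sq_sqrt (by positivity)]

lemma modNorm_one_le_of_norm_symplSTFT_le {p q : ℝ≥0∞} (hp : p ≠ 0) (hq : q ≠ 0)
    {Φ a : PhS d → ℂ} {c : ℝ} (hc : 0 ≤ c) {u v : PhS d → ℝ} (hu : ∀ X, 0 ≤ u X)
    (hu_finite : lpNormENN volume p (fun X => ENNReal.ofReal (u X)) ≠ ∞)
    (h : ∀ X Y, ‖symplSTFT d Φ a X Y‖ ≤ c * u X * v Y) :
    modNorm d p q (fun _ => 1) Φ a ≤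
      ENNReal.ofReal c * lpNormENN volume p (fun X => ENNReal.ofReal (u X)) *
        lpNormENN volume q (fun Y => ENNReal.ofReal (v Y)) := by
  rw [modNorm_one, ← lpNormENN_const_mul hq (ENNReal.mul_ne_top ENNReal.ofReal_ne_top hu_finite)]
  refine lpNormENN_mono q fun Y => ?_
  rw [mul_right_comm, ← lpNormENN_const_mul hp
    (ENNReal.mul_ne_top ENNReal.ofReal_ne_top ENNReal.ofReal_ne_top)]
  refine lpNormENN_mono p fun X => ?_
  rw [mul_right_comm, ← ENNReal.ofReal_mul hc, ← ENNReal.ofReal_mul (mul_nonneg hc (hu X)),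
    ← ofReal_norm]
  exact ENNReal.ofReal_le_ofReal (h X Y)

theorem exists_modNorm_squeezedGaussian_le {p q : ℝ≥0∞} (hp : 1 ≤ p) (hq : 1 ≤ q)
    (Φ : SchwartzMap (PhS d) ℂ) :
    ∃ K : ℝ, 0 ≤ K ∧ ∀ s (hs : 1 ≤ s),
      modNorm d p q (fun _ => 1) Φ (squeezedGaussian d (one_pos.trans_le hs)) ≤
        ENNReal.ofReal (K * s ^ (d * (rcp p + rcp q - 1))) := by
  obtain ⟨K, hK, hSTFT⟩ := exists_norm_symplSTFT_squeezedGaussian_le d.lt_succ_self Φ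
  obtain ⟨A, hA, hfst⟩ := exists_lpNormENN_squeezedWeight_le d.lt_succ_self hp
  obtain ⟨B, hB, hsnd⟩ := exists_lpNormENN_squeezedWeight_le d.lt_succ_self hq
  refine ⟨K * A * B, by positivity, fun s hs => ?_⟩
  have hs0 : 0 < s := one_pos.trans_le hs
  have hpow : s ^ (d * (rcp p + rcp q - 1)) = (s ^ d)⁻¹ * s ^ (d * rcp p) * s ^ (d * rcp q) := by
    rw [← Real.rpow_natCast, ← Real.rpow_neg hs0.le, ← Real.rpow_add hs0, ← Real.rpow_add hs0]
    ring_nf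
  calc modNorm d p q (fun _ => 1) Φ (squeezedGaussian d hs0)
      ≤ ENNReal.ofReal (K * (s ^ d)⁻¹) *
          lpNormENN volume p (fun X : PhS d => ENNReal.ofReal (squeezedWeight (d + 1) s X)) *
          lpNormENN volume q (fun X : PhS d => ENNReal.ofReal (squeezedWeight (d + 1) s X)) :=
        modNorm_one_le_of_norm_symplSTFT_le (one_pos.trans_le hp).ne' (one_pos.trans_le hq).ne'
          (by positivity) (squeezedWeight_nonneg _ hs0.le)
          (ne_top_of_le_ne_top ENNReal.ofReal_ne_top (hfst s hs0)) (hSTFT s hs)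
    _ ≤ ENNReal.ofReal (K * (s ^ d)⁻¹) * ENNReal.ofReal (A * s ^ (d * rcp p)) *
          ENNReal.ofReal (B * s ^ (d * rcp q)) := by
        gcongr
        exacts [hfst s hs0, hsnd s hs0]
    _ = ENNReal.ofReal (K * A * B * s ^ (d * (rcp p + rcp q - 1))) := by
        rw [← ENNReal.ofReal_mul (by positivity), ← ENNReal.ofReal_mul (by positivity), hpow]
        ring_nf

end ModulationNormSqueezedGaussian

section Necessity

variable {d : ℕ}

lemma nonneg_of_forall_le_mul_rpow {A c e : ℝ} (hA : 0 < A)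
    (h : ∀ s : ℝ, 1 ≤ s → A ≤ c * s ^ e) : 0 ≤ e := by
  by_contra! he
  have hlim : Tendsto (fun s : ℝ => c * s ^ e) atTop (nhds 0) := by
    simpa using (tendsto_rpow_neg_atTop (neg_pos.2 he)).const_mul c
  exact hA.not_ge (ge_of_tendsto hlim ((eventually_ge_atTop 1).mono h))

lemma modNorm_squeezedGaussian_eq_two_pow_mul_modNorm_weylProd {s : ℝ} {p q : ℝ≥0∞} (hp : p ≠ 0)
    (hq : q ≠ 0) (hs : 0 < s) (Φ : PhS d → ℂ) :
    modNorm d p q (fun _ => 1) Φ (squeezedGaussian d hs) = ENNReal.ofReal (2 ^ d) *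
      modNorm d p q (fun _ => 1) Φ
        (weylProd d (squeezedGaussian d hs) (squeezedGaussian d hs)) := by
  have hscale : ENNReal.ofReal (2 ^ d) * ‖((2 : ℂ) ^ d)⁻¹‖ₑ = 1 := by
    rw [← ofReal_norm, norm_inv, norm_pow, Complex.norm_ofNat,
      ← ENNReal.ofReal_mul (by positivity), mul_inv_cancel₀ (by positivity), ENNReal.ofReal_one]
  rw [weylProd_squeezedGaussian_self, modNorm_one_const_mul hp hq, ← mul_assoc, hscale, one_mul]

lemma exists_integral_norm_sq_mul_le_rpow_of_modNorm_weylProd_le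
    {p₀ q₀ p₀' q₀' p₁ q₁ p₂ q₂ : ℝ≥0∞} (hp : p₀⁻¹ + p₀'⁻¹ = 1) (hq : q₀⁻¹ + q₀'⁻¹ = 1)
    (hp₁ : 1 ≤ p₁) (hq₁ : 1 ≤ q₁) (hp₂ : 1 ≤ p₂) (hq₂ : 1 ≤ q₂)
    (Φ : SchwartzMap (PhS d) ℂ) {C : ℝ} (hC : 0 ≤ C)
    (hbound : ∀ s (hs : 0 < s),
      modNorm d p₀' q₀' (fun _ => 1) Φ
          (weylProd d (squeezedGaussian d hs) (squeezedGaussian d hs)) ≤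
        ENNReal.ofReal C * modNorm d p₁ q₁ (fun _ => 1) Φ (squeezedGaussian d hs) *
          modNorm d p₂ q₂ (fun _ => 1) Φ (squeezedGaussian d hs)) :
    ∃ c : ℝ, ∀ s, 1 ≤ s → (Real.pi / 2) ^ d * ∫ Z, ‖Φ Z‖ ^ 2 ≤
      c * s ^ (d * (rcp q₀ + rcp q₁ + rcp q₂ + rcp p₀ + rcp p₁ + rcp p₂ - 3)) := by
  obtain ⟨K₀, hK₀, hM₀⟩ := exists_modNorm_squeezedGaussian_le
    (one_le_of_inv_add_inv_eq_one ((add_comm _ _).trans hp))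
    (one_le_of_inv_add_inv_eq_one ((add_comm _ _).trans hq)) Φ
  obtain ⟨K₁, hK₁, hM₁⟩ := exists_modNorm_squeezedGaussian_le hp₁ hq₁ Φ
  obtain ⟨K₂, hK₂, hM₂⟩ := exists_modNorm_squeezedGaussian_le hp₂ hq₂ Φ
  refine ⟨K₀ * 2 ^ d * C * K₁ * K₂, fun s hs => ?_⟩
  have hs0 : 0 < s := one_pos.trans_le hs
  have hrpow : s ^ (d * (rcp q₀ + rcp q₁ + rcp q₂ + rcp p₀ + rcp p₁ + rcp p₂ - 3)) =
      s ^ (d * (rcp p₀ + rcp q₀ - 1)) * s ^ (d * (rcp p₁ + rcp q₁ - 1)) *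
        s ^ (d * (rcp p₂ + rcp q₂ - 1)) := by
    rw [← Real.rpow_add hs0, ← Real.rpow_add hs0]
    ring_nf
  rw [← ENNReal.ofReal_le_ofReal_iff (by positivity), ← integral_norm_sq_squeezedGaussian hs0]
  calc _ ≤ modNorm d p₀ q₀ (fun _ => 1) Φ (squeezedGaussian d hs0) *
          modNorm d p₀' q₀' (fun _ => 1) Φ (squeezedGaussian d hs0) :=
        ofReal_integral_norm_sq_mul_le_modNorm_mul_modNorm hp hq Φ _
    _ ≤ ENNReal.ofReal (K₀ * s ^ (d * (rcp p₀ + rcp q₀ - 1))) * (ENNReal.ofReal (2 ^ d) *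
          (ENNReal.ofReal C * ENNReal.ofReal (K₁ * s ^ (d * (rcp p₁ + rcp q₁ - 1))) *
            ENNReal.ofReal (K₂ * s ^ (d * (rcp p₂ + rcp q₂ - 1))))) := by
        rw [modNorm_squeezedGaussian_eq_two_pow_mul_modNorm_weylProd
          (one_pos.trans_le (one_le_of_inv_add_inv_eq_one hp)).ne'
          (one_pos.trans_le (one_le_of_inv_add_inv_eq_one hq)).ne']
        grw [hbound s hs0, hM₀ s hs, hM₁ s hs, hM₂ s hs]
    _ = _ := by
        rw [← ENNReal.ofReal_mul hC, ← ENNReal.ofReal_mul (by positivity),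
          ← ENNReal.ofReal_mul (by positivity), ← ENNReal.ofReal_mul (by positivity), hrpow]
        ring_nf

end Necessity

noncomputable section

/-- Lemma (necessity, mixed Gaussians): if the Weyl product satisfies the
unweighted modulation space bound, then
`3 ≤ 1/q₀ + 1/q₁ + 1/q₂ + 1/p₀ + 1/p₁ + 1/p₂`. -/
theorem weyl_product_necessary_sum_condition
    (d : ℕ) (hd : 1 ≤ d)
    (p q pc qc : Fin 3 → ℝ≥0∞)
    (hp : ∀ j, 1 ≤ p j) (hq : ∀ j, 1 ≤ q j)
    (hpc : ∀ j, (p j)⁻¹ + (pc j)⁻¹ = 1) (hqc : ∀ j, (q j)⁻¹ + (qc j)⁻¹ = 1)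
    (Φ : SchwartzMap (PhS d) ℂ) (hΦ : Φ ≠ 0)
    (C : ℝ) (hC : 0 < C)
    (hbound : ∀ a b : SchwartzMap (PhS d) ℂ,
      modNorm d (pc 0) (qc 0) (fun _ => 1) (⇑Φ) (weylProd d (⇑a) (⇑b)) ≤
        ENNReal.ofReal C * modNorm d (p 1) (q 1) (fun _ => 1) (⇑Φ) (⇑a) *
          modNorm d (p 2) (q 2) (fun _ => 1) (⇑Φ) (⇑b)) :
    3 ≤ rcp (q 0) + rcp (q 1) + rcp (q 2) + rcp (p 0) + rcp (p 1) + rcp (p 2) := by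
  have hΦ_pos : 0 < (Real.pi / 2) ^ d * ∫ Z, ‖Φ Z‖ ^ 2 :=
    mul_pos (by positivity) (integral_norm_sq_schwartz_pos volume hΦ)
  obtain ⟨c, hgrowth⟩ := exists_integral_norm_sq_mul_le_rpow_of_modNorm_weylProd_le
    (hpc 0) (hqc 0) (hp 1) (hq 1) (hp 2) (hq 2) Φ hC.le
    fun _ hs => hbound (squeezedGaussian d hs) (squeezedGaussian d hs)
  have hexponent := nonneg_of_forall_le_mul_rpow hΦ_pos hgrowth
  rw [mul_nonneg_iff_of_pos_left (by exact_mod_cast hd)] at hexponent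
  exact sub_nonneg.1 hexponent

end
end

section
/- Let d ≥ 1 and λ > 0, and let a_λ be the Schwartz function on ℝ^{2d} given by a_λ(X) = e^{−λ|X|²}. Then for every X ∈ ℝ^{2d}: (a_λ # a_λ)(X) = (1+λ²)^{−d} exp( −2λ|X|² / (1+λ²) ). -/
open MeasureTheory Filter
open scoped ENNReal RealInnerProductSpace BigOperators

noncomputable section

/-!
Write `G_α(X) = e^{-α|X|²}`. Since `σ(X, Y) = ⟨JX, Y⟩` with `J(x, ξ) = (ξ, -x)`, where `JX` is
orthogonal to `X` and has the same length, the integral of `G_b(Y) exp(c⟨X, Y⟩ + c'σ(X, Y))` over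
`Y` produces no cross term, and its value `(π/b)^d exp((c² + c'²)|X|²/(4b))` is again a Gaussian
in `X`. For `c = 0`, `c' = 2i` this gives `F_σ G_β = β^{-d} G_{1/β}`. Expanding `|X - Y|²`, the
case `c = 2α`, `c' = 2i` evaluates `G_α ∗_σ G_{1/β}`, and hence `G_α # G_β`.
-/

section GaussianIntegral

variable {V : Type*} [NormedAddCommGroup V] [InnerProductSpace ℝ V] [FiniteDimensional ℝ V]
  [MeasurableSpace V] [BorelSpace V]

lemma integral_cexp_neg_mul_sq_norm_add_linearMap {ι : Type*} [Fintype ι]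
    (e : OrthonormalBasis ι ℝ V) {b : ℂ} (hb : 0 < b.re) (ℓ : V →ₗ[ℝ] ℂ) :
    ∫ v : V, Complex.exp (-b * (‖v‖ : ℂ) ^ 2 + ℓ v) =
      (Real.pi / b) ^ ((Fintype.card ι : ℂ) / 2) *
        Complex.exp ((∑ i, ℓ (e i) ^ 2) / (4 * b)) := by
  rw [← GaussianFourier.integral_cexp_neg_mul_sum_add hb,
    ← e.measurePreserving_measurableEquiv.symm.integral_comp
      e.measurableEquiv.symm.measurableEmbedding,
    ← (PiLp.volume_preserving_toLp ι).integral_comp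
      (MeasurableEquiv.toLp 2 _).measurableEmbedding]
  refine integral_congr_ae (.of_forall fun v => ?_)
  have norm_coord : (‖e.repr.symm (WithLp.toLp 2 v)‖ : ℂ) ^ 2 = ∑ i, (v i : ℂ) ^ 2 := by
    rw [LinearIsometryEquiv.norm_map, ← Complex.ofReal_pow, EuclideanSpace.real_norm_sq_eq]
    push_cast
    rfl
  have linear_coord : ℓ (e.repr.symm (WithLp.toLp 2 v)) = ∑ i, ℓ (e i) * v i := by
    simp [← e.sum_repr_symm, mul_comm]
  exact congrArg Complex.exp (by rw [← norm_coord, ← linear_coord]; rfl)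

lemma integral_cexp_neg_mul_sq_norm_add_inner_add_inner {b : ℂ} (hb : 0 < b.re) (c c' : ℂ)
    (w w' : V) :
    ∫ v : V, Complex.exp (-b * (‖v‖ : ℂ) ^ 2 + (c * ⟪w, v⟫ + c' * ⟪w', v⟫)) =
      (Real.pi / b) ^ ((Module.finrank ℝ V : ℂ) / 2) *
        Complex.exp ((c ^ 2 * ‖w‖ ^ 2 + 2 * c * c' * ⟪w, w'⟫ + c' ^ 2 * ‖w'‖ ^ 2) / (4 * b)) := by
  let e := stdOrthonormalBasis ℝ V
  let ℓ : V →ₗ[ℝ] ℂ :=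
    { toFun v := c * ⟪w, v⟫ + c' * ⟪w', v⟫
      map_add' u v := by simp only [inner_add_right, Complex.ofReal_add]; ring
      map_smul' r v := by
        simp only [real_inner_smul_right, Complex.ofReal_mul, Complex.real_smul, RingHom.id_apply]
        ring }
  have parseval (u u' : V) : ((⟪u, u'⟫ : ℝ) : ℂ) = ∑ i, (⟪u, e i⟫ : ℂ) * (⟪u', e i⟫ : ℂ) := by
    simp only [← e.sum_inner_mul_inner u u', real_inner_comm (e _) u', Complex.ofReal_sum,
      Complex.ofReal_mul]
  have sum_sq : ∑ i, ℓ (e i) ^ 2 =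
      c ^ 2 * ‖w‖ ^ 2 + 2 * c * c' * ⟪w, w'⟫ + c' ^ 2 * ‖w'‖ ^ 2 := by
    simp only [← Complex.ofReal_pow, ← real_inner_self_eq_norm_sq]
    rw [parseval w w, parseval w w', parseval w' w']
    simp only [Finset.mul_sum, ← Finset.sum_add_distrib]
    exact Finset.sum_congr rfl fun i _ => by simp only [ℓ, LinearMap.coe_mk, AddHom.coe_mk]; ring
  have gaussian_integral := integral_cexp_neg_mul_sq_norm_add_linearMap e hb ℓ
  rwa [sum_sq, Fintype.card_fin] at gaussian_integral

end GaussianIntegral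

section PhaseSpace

variable {d : ℕ}

/-- The Gaussian `X ↦ e^{-α|X|²}` on phase space with complex parameter `α`. The Euclidean norm
`|X|² = |x|² + |ξ|²` is spelled out because the product type `PhS d` carries the sup norm. -/
def phaseGaussian (α : ℂ) (X : PhS d) : ℂ :=
  Complex.exp (-α * ((‖X.1‖ : ℂ) ^ 2 + (‖X.2‖ : ℂ) ^ 2))

lemma phaseGaussian_ofReal (r : ℝ) (X : PhS d) :
    phaseGaussian (r : ℂ) X = ((Real.exp (-r * (‖X.1‖ ^ 2 + ‖X.2‖ ^ 2)) : ℝ) : ℂ) := by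
  simp [phaseGaussian]

lemma phaseGaussian_mul_phaseGaussian (α β : ℂ) (X : PhS d) :
    phaseGaussian α X * phaseGaussian β X = phaseGaussian (α + β) X := by
  simp only [phaseGaussian, ← Complex.exp_add]
  ring_nf

lemma phaseGaussian_sub (α : ℂ) (X Y : PhS d) :
    phaseGaussian α (X - Y) = phaseGaussian α X * phaseGaussian α Y *
      Complex.exp (2 * α * (⟪X.1, Y.1⟫ + ⟪X.2, Y.2⟫ : ℝ)) := by
  simp only [phaseGaussian, ← Complex.exp_add, Prod.fst_sub, Prod.snd_sub,
    ← Complex.ofReal_pow, norm_sub_sq_real]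
  push_cast
  ring_nf

lemma phaseGaussian_eq_cexp_norm_toLp (α : ℂ) (X : PhS d) :
    phaseGaussian α X = Complex.exp (-α * (‖WithLp.toLp 2 X‖ : ℂ) ^ 2) := by
  rw [phaseGaussian, ← Complex.ofReal_pow ‖WithLp.toLp 2 X‖, WithLp.prod_norm_sq_eq_of_L2]
  push_cast
  rfl

/-- The rotation `J(x, ξ) = (ξ, -x)` of phase space, which turns the Euclidean inner product into
the symplectic form. -/
def symplRot (X : PhS d) : PhS d := (X.2, -X.1)

lemma symplForm_eq_inner_symplRot (X Y : PhS d) :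
    symplForm X Y = ⟪WithLp.toLp 2 (symplRot X), WithLp.toLp 2 Y⟫ := by
  simp [symplForm, symplRot, WithLp.prod_inner_apply, real_inner_comm, sub_eq_add_neg]

lemma inner_toLp_symplRot_self (X : PhS d) :
    ⟪WithLp.toLp 2 X, WithLp.toLp 2 (symplRot X)⟫ = 0 := by
  simp [symplRot, WithLp.prod_inner_apply, real_inner_comm]

lemma norm_toLp_symplRot (X : PhS d) :
    ‖WithLp.toLp 2 (symplRot X)‖ = ‖WithLp.toLp 2 X‖ := by
  simp [symplRot, WithLp.prod_norm_eq_of_L2, add_comm]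

lemma integral_phaseGaussian_mul_cexp_inner_add_symplForm {b : ℂ} (hb : 0 < b.re) (c c' : ℂ)
    (X : PhS d) :
    ∫ Y : PhS d, phaseGaussian b Y *
        Complex.exp (c * (⟪X.1, Y.1⟫ + ⟪X.2, Y.2⟫ : ℝ) + c' * symplForm X Y) =
      (Real.pi / b) ^ d * phaseGaussian (-(c ^ 2 + c' ^ 2) / (4 * b)) X := by
  let E := EuclideanSpace ℝ (Fin d)
  have finrank_half : (Module.finrank ℝ (WithLp 2 (E × E)) : ℂ) / 2 = d := by
    have finrank_eq : Module.finrank ℝ (WithLp 2 (E × E)) = d + d := by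
      simp [E, (WithLp.linearEquiv 2 ℝ (E × E)).finrank_eq]
    rw [finrank_eq]
    push_cast
    ring
  have inner_toLp (Y : PhS d) :
      ⟪X.1, Y.1⟫ + ⟪X.2, Y.2⟫ = ⟪WithLp.toLp 2 X, WithLp.toLp 2 Y⟫ :=
    (WithLp.prod_inner_apply _ _).symm
  have gaussian_integral := integral_cexp_neg_mul_sq_norm_add_inner_add_inner hb c c'
    (WithLp.toLp 2 X) (WithLp.toLp 2 (symplRot X))
  rw [norm_toLp_symplRot, inner_toLp_symplRot_self, finrank_half, Complex.cpow_natCast,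
    ← (WithLp.volume_preserving_toLp E E).integral_comp
      (MeasurableEquiv.toLp 2 (E × E)).measurableEmbedding] at gaussian_integral
  simp only [phaseGaussian_eq_cexp_norm_toLp, ← Complex.exp_add, inner_toLp,
    symplForm_eq_inner_symplRot]
  rw [gaussian_integral]
  push_cast
  ring_nf

lemma symplFT_phaseGaussian {α : ℂ} (hα : 0 < α.re) :
    symplFT d (phaseGaussian α) = (α ^ d)⁻¹ • phaseGaussian α⁻¹ := by
  funext X
  have gaussian_integral :=
    integral_phaseGaussian_mul_cexp_inner_add_symplForm hα 0 (2 * Complex.I) X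
  simp only [zero_mul, zero_add] at gaussian_integral
  have pi_pow_ne : (Real.pi : ℂ) ^ d ≠ 0 := by simp [Real.pi_ne_zero]
  have param : -(0 ^ 2 + (2 * Complex.I) ^ 2) / (4 * α) = α⁻¹ := by
    rw [mul_pow, Complex.I_sq]
    ring
  rw [symplFT, gaussian_integral, param, Pi.smul_apply, smul_eq_mul, div_pow]
  field_simp

lemma twistConv_smul_right (a b : PhS d → ℂ) (z : ℂ) :
    twistConv d a (z • b) = z • twistConv d a b := by
  funext X
  simp only [twistConv, Pi.smul_apply, smul_eq_mul, mul_left_comm _ z, mul_assoc z,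
    integral_const_mul]

lemma twistConv_phaseGaussian {α β : ℂ} (hαβ : 0 < (α + β).re) (X : PhS d) :
    twistConv d (phaseGaussian α) (phaseGaussian β) X =
      (((2 / Real.pi) ^ ((d : ℝ) / 2) : ℝ) : ℂ) *
        ((Real.pi / (α + β)) ^ d * phaseGaussian ((1 + α * β) / (α + β)) X) := by
  have sum_ne : α + β ≠ 0 := fun h => by simp [h] at hαβ
  have expand (Y : PhS d) :
      phaseGaussian α (X - Y) * phaseGaussian β Y *
          Complex.exp (2 * Complex.I * (symplForm X Y : ℂ)) =
        phaseGaussian α X * (phaseGaussian (α + β) Y *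
          Complex.exp (2 * α * (⟪X.1, Y.1⟫ + ⟪X.2, Y.2⟫ : ℝ) +
            2 * Complex.I * symplForm X Y)) := by
    rw [phaseGaussian_sub, ← phaseGaussian_mul_phaseGaussian, Complex.exp_add]
    ring
  have param : α + -((2 * α) ^ 2 + (2 * Complex.I) ^ 2) / (4 * (α + β)) =
      (1 + α * β) / (α + β) := by
    rw [mul_pow 2 Complex.I, Complex.I_sq]
    field_simp
    ring
  simp only [twistConv, expand]
  rw [integral_const_mul, integral_phaseGaussian_mul_cexp_inner_add_symplForm hαβ,
    mul_left_comm (phaseGaussian α X), phaseGaussian_mul_phaseGaussian, param]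

lemma two_mul_pi_rpow_neg_mul_two_div_pi_rpow (s : ℝ) :
    (2 * Real.pi) ^ (-s / 2) * (2 / Real.pi) ^ (s / 2) = (Real.pi ^ s)⁻¹ := by
  have pi_pos := Real.pi_pos
  have base : (2 * Real.pi)⁻¹ * (2 / Real.pi) = (Real.pi ^ (2 : ℝ))⁻¹ := by
    rw [Real.rpow_two]
    field_simp
  rw [neg_div, Real.rpow_neg (by positivity), ← Real.inv_rpow (by positivity),
    ← Real.mul_rpow (by positivity) (by positivity), base, Real.inv_rpow (by positivity),
    ← Real.rpow_mul pi_pos.le, mul_div_cancel₀ _ two_ne_zero]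

theorem weylProd_gaussian_general {α β : ℂ} (hβ : 0 < β.re) (hαβ : 0 < (α + β⁻¹).re)
    (X : PhS d) :
    weylProd d (phaseGaussian α) (phaseGaussian β) X =
      ((1 + α * β) ^ d)⁻¹ * phaseGaussian ((α + β) / (1 + α * β)) X := by
  have β_ne : β ≠ 0 := fun h => by simp [h] at hβ
  have sum_eq : α + β⁻¹ = (1 + α * β) / β := by field_simp; ring
  have one_add_mul_ne : 1 + α * β ≠ 0 := fun h => by simp [sum_eq, h] at hαβ
  have pi_pow_ne : (Real.pi : ℂ) ^ d ≠ 0 := by simp [Real.pi_ne_zero]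
  have normalization : (((2 * Real.pi) ^ (-(d : ℝ) / 2) : ℝ) : ℂ) *
      (((2 / Real.pi) ^ ((d : ℝ) / 2) : ℝ) : ℂ) = ((Real.pi : ℂ) ^ d)⁻¹ := by
    rw [← Complex.ofReal_mul, two_mul_pi_rpow_neg_mul_two_div_pi_rpow, Real.rpow_natCast]
    push_cast
    rfl
  have param : (1 + α * β⁻¹) / (α + β⁻¹) = (α + β) / (1 + α * β) := by
    rw [sum_eq]
    field_simp
    ring
  rw [weylProd, symplFT_phaseGaussian hβ, twistConv_smul_right, Pi.smul_apply, smul_eq_mul,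
    twistConv_phaseGaussian hαβ, mul_left_comm, ← mul_assoc (Complex.ofReal _), normalization,
    param, sum_eq, div_pow, div_pow]
  field_simp

end PhaseSpace

/-- The Weyl product of the Gaussian `a_λ(X) = e^{-λ|X|²}` with itself:
`(a_λ # a_λ)(X) = (1+λ²)^{-d} exp(-2λ|X|²/(1+λ²))`. -/
theorem weylProd_gaussian
    (d : ℕ) (hd : 1 ≤ d) (lam : ℝ) (hlam : 0 < lam) (X : PhS d) :
    weylProd d
        (fun Y => ((Real.exp (-lam * (‖Y.1‖ ^ 2 + ‖Y.2‖ ^ 2)) : ℝ) : ℂ))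
        (fun Y => ((Real.exp (-lam * (‖Y.1‖ ^ 2 + ‖Y.2‖ ^ 2)) : ℝ) : ℂ)) X =
      ((((1 + lam ^ 2) ^ d)⁻¹ *
        Real.exp (-(2 * lam * (‖X.1‖ ^ 2 + ‖X.2‖ ^ 2)) / (1 + lam ^ 2)) : ℝ) : ℂ) := by
  have re_pos : 0 < ((lam : ℂ) + (lam : ℂ)⁻¹).re := by
    rw [← Complex.ofReal_inv, ← Complex.ofReal_add, Complex.ofReal_re]
    positivity
  simp only [← phaseGaussian_ofReal]
  rw [weylProd_gaussian_general hlam re_pos, phaseGaussian]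
  push_cast
  ring_nf

end
end

section
/- Let N ≥ 2 and p_j, q_j ∈ [1,∞] for j = 0,1,…,N. Then the condition max(R_N(q′), 0) ≤ min_{j=0,…,N} ( 1/p_j , 1/p_j′ , 1/q_j , 1/q_j′ , R_N(p) ) holds if and only if there exist θ ∈ [0,1] and exponents r_j, s_j ∈ [1,∞] for j = 0,…,N such that R_N(s′) ≤ 0 ≤ R_N(r) and, for every j, 1/p_j = (1−θ)/r_j + θ/2 and 1/q_j = (1−θ)/s_j + θ/2. -/
open scoped ENNReal BigOperators

noncomputable section

/-!
The normalisation of `R_N` is such that `R_N(2,…,2) = 1/2`, so `1/p_j = (1-θ)/r_j + θ/2` for all `j`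
implies `R_N(p) = (1-θ) R_N(r) + θ/2`. For a fixed `θ ∈ [0,1]`, solving for `r` and `s` therefore
shows that they exist if and only if `θ/2` is a lower bound for all of `1/p_j`, `1/p_j′`, `1/q_j`,
`1/q_j′`, `R_N(p)` and an upper bound for `R_N(q′)`. A suitable `θ` exists if and only if
`θ = 2 max(R_N(q′), 0)` is suitable.
-/

theorem rcp_nonneg (a : ℝ≥0∞) : 0 ≤ rcp a := ENNReal.toReal_nonneg

theorem exists_one_le_rcp_eq {x : ℝ} (hx : x ∈ Set.Icc (0 : ℝ) 1) :
    ∃ a : ℝ≥0∞, 1 ≤ a ∧ rcp a = x :=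
  ⟨(ENNReal.ofReal x)⁻¹, by simpa using hx.2, by simp [rcp, hx.1]⟩

theorem rcp_add_rcp_eq_one {a b : ℝ≥0∞} (h : a⁻¹ + b⁻¹ = 1) : rcp a + rcp b = 1 := by
  have hab : a⁻¹ + b⁻¹ ≠ ∞ := h ▸ ENNReal.one_ne_top
  obtain ⟨ha, hb⟩ := ENNReal.add_ne_top.1 hab
  rw [rcp, rcp, ← ENNReal.toReal_add ha hb, h, ENNReal.toReal_one]

theorem exists_inv_add_inv_eq_one {a : ℝ≥0∞} (ha : 1 ≤ a) : ∃ b : ℝ≥0∞, a⁻¹ + b⁻¹ = 1 :=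
  ⟨(1 - a⁻¹)⁻¹, by rw [inv_inv, add_tsub_cancel_of_le (ENNReal.inv_le_one.2 ha)]⟩

theorem RN_one_nonneg {N : ℕ} (hN : 1 ≤ N) : 0 ≤ RN N fun _ ↦ 1 := by
  have hN' : (1 : ℝ) ≤ N := by exact_mod_cast hN
  exact div_nonneg (by simp [rcp]) (sub_nonneg.2 hN')

theorem RN_top_nonpos {N : ℕ} (hN : 1 ≤ N) : RN N (fun _ ↦ ∞) ≤ 0 := by
  have hN' : (1 : ℝ) ≤ N := by exact_mod_cast hN
  exact div_nonpos_of_nonpos_of_nonneg (by simp [rcp]) (sub_nonneg.2 hN')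

/-- `p` is the complex interpolation, with parameter `θ`, of the exponents `r` with the constant
exponent `2`, that is, `1/p_j = (1-θ)/r_j + θ/2` for every `j`. -/
def IsInterpolationWithTwo {ι : Type*} (θ : ℝ) (p r : ι → ℝ≥0∞) : Prop :=
  ∀ j, rcp (p j) = (1 - θ) * rcp (r j) + θ / 2

section Tuple

variable {ι : Type*} {θ : ℝ} {p pc r rc : ι → ℝ≥0∞}

theorem IsInterpolationWithTwo.conjugate (h : IsInterpolationWithTwo θ p r)
    (hp : ∀ j, (p j)⁻¹ + (pc j)⁻¹ = 1) (hr : ∀ j, (r j)⁻¹ + (rc j)⁻¹ = 1) :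
    IsInterpolationWithTwo θ pc rc := fun j ↦ by
  linear_combination rcp_add_rcp_eq_one (hp j) - (1 - θ) * rcp_add_rcp_eq_one (hr j) - h j

theorem IsInterpolationWithTwo.half_le_rcp (h : IsInterpolationWithTwo θ p r) (hθ : θ ≤ 1)
    (j : ι) : θ / 2 ≤ rcp (p j) := by
  rw [h j]
  exact le_add_of_nonneg_left (mul_nonneg (sub_nonneg.2 hθ) (rcp_nonneg _))

theorem IsInterpolationWithTwo.half_le_rcp_conjugate (h : IsInterpolationWithTwo θ p r)
    (hθ : θ ≤ 1) (hr : ∀ j, 1 ≤ r j) (hp : ∀ j, (p j)⁻¹ + (pc j)⁻¹ = 1) (j : ι) :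
    θ / 2 ≤ rcp (pc j) := by
  choose rc hrc using fun j ↦ exists_inv_add_inv_eq_one (hr j)
  exact (h.conjugate hp hrc).half_le_rcp hθ j

theorem isInterpolationWithTwo_one (hp : ∀ j, (p j)⁻¹ + (pc j)⁻¹ = 1)
    (hle : ∀ j, 1 / 2 ≤ rcp (p j) ∧ 1 / 2 ≤ rcp (pc j)) (r : ι → ℝ≥0∞) :
    IsInterpolationWithTwo 1 p r := fun j ↦ by
  linarith [hle j, rcp_add_rcp_eq_one (hp j)]

theorem exists_isInterpolationWithTwo (hθ : θ < 1) (hp : ∀ j, (p j)⁻¹ + (pc j)⁻¹ = 1)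
    (hle : ∀ j, θ / 2 ≤ rcp (p j) ∧ θ / 2 ≤ rcp (pc j)) :
    ∃ r : ι → ℝ≥0∞, (∀ j, 1 ≤ r j) ∧ IsInterpolationWithTwo θ p r := by
  have hθ' : 0 < 1 - θ := sub_pos.2 hθ
  have hmem (j : ι) : (rcp (p j) - θ / 2) / (1 - θ) ∈ Set.Icc (0 : ℝ) 1 :=
    ⟨div_nonneg (sub_nonneg.2 (hle j).1) hθ'.le,
      (div_le_one hθ').2 (by linarith [hle j, rcp_add_rcp_eq_one (hp j)])⟩
  choose r hr hrcp using fun j ↦ exists_one_le_rcp_eq (hmem j)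
  refine ⟨r, hr, fun j ↦ ?_⟩
  rw [hrcp, mul_div_cancel₀ _ hθ'.ne', sub_add_cancel]

end Tuple

section HolderYoung

variable {N : ℕ} {θ : ℝ} {p pc q qc r : Fin (N + 1) → ℝ≥0∞}

theorem IsInterpolationWithTwo.RN_eq (h : IsInterpolationWithTwo θ p r) (hN : N ≠ 1) :
    RN N p = (1 - θ) * RN N r + θ / 2 := by
  have hN' : (N : ℝ) - 1 ≠ 0 := sub_ne_zero.2 (by exact_mod_cast hN)
  have hsum : ∑ j, rcp (p j) = (1 - θ) * ∑ j, rcp (r j) + (N + 1) * (θ / 2) := by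
    simp [h _, Finset.sum_add_distrib, Finset.mul_sum]
  rw [RN, RN, hsum]
  field_simp
  ring

theorem IsInterpolationWithTwo.half_le_RN (h : IsInterpolationWithTwo θ p r) (hN : N ≠ 1)
    (hθ : θ ≤ 1) (hr : 0 ≤ RN N r) : θ / 2 ≤ RN N p := by
  rw [h.RN_eq hN]
  exact le_add_of_nonneg_left (mul_nonneg (sub_nonneg.2 hθ) hr)

theorem IsInterpolationWithTwo.RN_le_half (h : IsInterpolationWithTwo θ p r) (hN : N ≠ 1)
    (hθ : θ ≤ 1) (hr : RN N r ≤ 0) : RN N p ≤ θ / 2 := by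
  rw [h.RN_eq hN]
  exact add_le_of_nonpos_left (mul_nonpos_of_nonneg_of_nonpos (sub_nonneg.2 hθ) hr)

theorem IsInterpolationWithTwo.RN_nonneg (h : IsInterpolationWithTwo θ p r) (hN : N ≠ 1)
    (hθ : θ < 1) (hp : θ / 2 ≤ RN N p) : 0 ≤ RN N r := by
  rw [h.RN_eq hN, le_add_iff_nonneg_left] at hp
  exact nonneg_of_mul_nonneg_right hp (sub_pos.2 hθ)

theorem IsInterpolationWithTwo.RN_nonpos (h : IsInterpolationWithTwo θ p r) (hN : N ≠ 1)
    (hθ : θ < 1) (hp : RN N p ≤ θ / 2) : RN N r ≤ 0 := by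
  rw [h.RN_eq hN, add_le_iff_nonpos_left] at hp
  exact nonpos_of_mul_nonpos_right hp (sub_pos.2 hθ)

theorem exists_isInterpolationWithTwo_RN_nonneg_iff (hN : 2 ≤ N) (hθ : θ ≤ 1)
    (hp : ∀ j, (p j)⁻¹ + (pc j)⁻¹ = 1) :
    (∃ r, (∀ j, 1 ≤ r j) ∧ 0 ≤ RN N r ∧ IsInterpolationWithTwo θ p r) ↔
      (∀ j, θ / 2 ≤ rcp (p j) ∧ θ / 2 ≤ rcp (pc j)) ∧ θ / 2 ≤ RN N p := by
  have hN1 : N ≠ 1 := by lia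
  constructor
  · rintro ⟨r, hr, hRr, h⟩
    exact ⟨fun j ↦ ⟨h.half_le_rcp hθ j, h.half_le_rcp_conjugate hθ hr hp j⟩,
      h.half_le_RN hN1 hθ hRr⟩
  · rintro ⟨hle, hRp⟩
    obtain rfl | hθ := hθ.eq_or_lt
    · exact ⟨fun _ ↦ 1, fun _ ↦ le_rfl, RN_one_nonneg (by lia), isInterpolationWithTwo_one hp hle _⟩
    · obtain ⟨r, hr, h⟩ := exists_isInterpolationWithTwo hθ hp hle
      exact ⟨r, hr, h.RN_nonneg hN1 hθ hRp, h⟩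

theorem exists_isInterpolationWithTwo_RN_conjugate_nonpos_iff (hN : 2 ≤ N) (hθ : θ ≤ 1)
    (hq : ∀ j, (q j)⁻¹ + (qc j)⁻¹ = 1) :
    (∃ s sc, (∀ j, 1 ≤ s j) ∧ (∀ j, (s j)⁻¹ + (sc j)⁻¹ = 1) ∧ RN N sc ≤ 0 ∧
        IsInterpolationWithTwo θ q s) ↔
      (∀ j, θ / 2 ≤ rcp (q j) ∧ θ / 2 ≤ rcp (qc j)) ∧ RN N qc ≤ θ / 2 := by
  have hN1 : N ≠ 1 := by lia
  constructor
  · rintro ⟨s, sc, hs, hsc, hRsc, h⟩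
    exact ⟨fun j ↦ ⟨h.half_le_rcp hθ j, h.half_le_rcp_conjugate hθ hs hq j⟩,
      (h.conjugate hq hsc).RN_le_half hN1 hθ hRsc⟩
  · rintro ⟨hle, hRqc⟩
    obtain rfl | hθ := hθ.eq_or_lt
    · exact ⟨fun _ ↦ 1, fun _ ↦ ∞, fun _ ↦ le_rfl, fun _ ↦ by simp, RN_top_nonpos (by lia),
        isInterpolationWithTwo_one hq hle _⟩
    · obtain ⟨s, hs, h⟩ := exists_isInterpolationWithTwo hθ hq hle
      choose sc hsc using fun j ↦ exists_inv_add_inv_eq_one (hs j)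
      exact ⟨s, sc, hs, hsc, (h.conjugate hq hsc).RN_nonpos hN1 hθ hRqc, h⟩

end HolderYoung

/-- Remark: the interpolation-type conditions on `(p,q)` hold if and only if
`(p,q)` is a complex interpolation of a Hölder–Young tuple `(r,s)` with the
tuple `(2,…,2)`. -/
theorem interpolation_conditions_iff_exists_interpolation_parameters
    (N : ℕ) (hN : 2 ≤ N)
    (p q pc qc : Fin (N + 1) → ℝ≥0∞)
    (hp : ∀ j, 1 ≤ p j) (hq : ∀ j, 1 ≤ q j)
    (hpc : ∀ j, (p j)⁻¹ + (pc j)⁻¹ = 1) (hqc : ∀ j, (q j)⁻¹ + (qc j)⁻¹ = 1) :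
    (∀ j, max (RN N qc) 0 ≤
      min (rcp (p j)) (min (rcp (pc j)) (min (rcp (q j)) (min (rcp (qc j)) (RN N p))))) ↔
    ∃ (θ : ℝ) (r s sc : Fin (N + 1) → ℝ≥0∞),
      θ ∈ Set.Icc (0 : ℝ) 1 ∧
      (∀ j, 1 ≤ r j) ∧ (∀ j, 1 ≤ s j) ∧
      (∀ j, (s j)⁻¹ + (sc j)⁻¹ = 1) ∧
      RN N sc ≤ 0 ∧ 0 ≤ RN N r ∧
      (∀ j, rcp (p j) = (1 - θ) * rcp (r j) + θ / 2) ∧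
      (∀ j, rcp (q j) = (1 - θ) * rcp (s j) + θ / 2) := by
  constructor
  · intro h
    obtain ⟨θ, hθ⟩ : ∃ θ : ℝ, θ / 2 = max (RN N qc) 0 := ⟨2 * max (RN N qc) 0, by ring⟩
    simp only [← hθ, le_min_iff] at h
    have hθ_nonneg : 0 ≤ θ := by linarith [le_max_right (RN N qc) 0]
    have hθ_le_one : θ ≤ 1 := by linarith [h 0, rcp_add_rcp_eq_one (hpc 0)]
    obtain ⟨r, hr, hRr, hpr⟩ := (exists_isInterpolationWithTwo_RN_nonneg_iff hN hθ_le_one hpc).2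
      ⟨fun j ↦ ⟨(h j).1, (h j).2.1⟩, (h 0).2.2.2.2⟩
    obtain ⟨s, sc, hs, hsc, hRsc, hqs⟩ :=
      (exists_isInterpolationWithTwo_RN_conjugate_nonpos_iff hN hθ_le_one hqc).2
        ⟨fun j ↦ ⟨(h j).2.2.1, (h j).2.2.2.1⟩, hθ ▸ le_max_left _ _⟩
    exact ⟨θ, r, s, sc, ⟨hθ_nonneg, hθ_le_one⟩, hr, hs, hsc, hRsc, hRr, hpr, hqs⟩
  · rintro ⟨θ, r, s, sc, ⟨hθ_nonneg, hθ_le_one⟩, hr, hs, hsc, hRsc, hRr, hpr, hqs⟩ j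
    obtain ⟨hp_le, hRp⟩ :=
      (exists_isInterpolationWithTwo_RN_nonneg_iff hN hθ_le_one hpc).1 ⟨r, hr, hRr, hpr⟩
    obtain ⟨hq_le, hRqc⟩ := (exists_isInterpolationWithTwo_RN_conjugate_nonpos_iff hN hθ_le_one
      hqc).1 ⟨s, sc, hs, hsc, hRsc, hqs⟩
    calc max (RN N qc) 0 ≤ θ / 2 := max_le hRqc (by positivity)
      _ ≤ _ := le_min (hp_le j).1 <| le_min (hp_le j).2 <| le_min (hq_le j).1 <|
        le_min (hq_le j).2 hRp

end
end
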